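/- arXiv:1309.1974 — 2 statements merged into one kernel-verified Lean document; each statement's English description precedes it below -/
import Mathlib

section
/- Let 1 ≤ n < α, p = 2n/(n+α), q = 2n/(n−α). Then for every nonnegative f ∈ L^p(ℝⁿ), ‖I_α f‖_{L^q(ℝⁿ)} ≥ N*(n, α)·‖f‖_{L^p(ℝⁿ)}, where N*(n, α) = π^{(n−α)/2} · Γ(α/2)/Γ((n+α)/2) · (Γ(n/2)/Γ(n))^{−α/n}. -/
open MeasureTheory ENNReal

/-- The Riesz-type integral operator `I_α f(x) = ∫_{ℝⁿ} f(y) |x-y|^(α-n) dy` for `α > n`,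
valued in `ℝ≥0∞`. -/
noncomputable def rieszNeg (n : ℕ) (α : ℝ) (f : EuclideanSpace ℝ (Fin n) → ℝ)
    (x : EuclideanSpace ℝ (Fin n)) : ℝ≥0∞ :=
  ∫⁻ y, ENNReal.ofReal (f y * dist x y ^ (α - n))

namespace RHLS
open MeasureTheory ENNReal
open scoped NNReal
set_option linter.unusedSectionVars false

/-- A conformal reflection on a measure space. -/
structure ConfInv {X : Type*} [MeasurableSpace X] (μ : Measure X) (K : X → X → ℝ≥0) (d l : ℝ)
    (σ : X → X) (κ : X → ℝ≥0) (S : Set X) : Prop where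
  msσ : Measurable σ
  msκ : Measurable κ
  cov : ∀ φ : X → ℝ≥0∞, Measurable φ →
    ∫⁻ x, φ x ∂μ = ∫⁻ x, φ (σ x) * ((κ x ^ d : ℝ≥0) : ℝ≥0∞) ∂μ
  ae : ∀ᵐ x ∂μ, x ∈ S
  maps : ∀ x ∈ S, σ x ∈ S
  inv : ∀ x ∈ S, σ (σ x) = x
  pos : ∀ x ∈ S, 0 < κ x
  kinv : ∀ x ∈ S, κ (σ x) = (κ x)⁻¹
  kne : ∀ x ∈ S, κ x ≠ 1
  Kconf : ∀ x ∈ S, ∀ y ∈ S, K (σ x) (σ y) = κ x ^ l * κ y ^ l * K x y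
  Ksign : ∀ x ∈ S, ∀ y ∈ S, (κ x < 1 ↔ κ y < 1) → K x y ≤ K x (σ y) * κ y ^ (-l)

section
variable {X : Type*} [MeasurableSpace X]

/-- conformal pull back -/
noncomputable def cs (σ : X → X) (κ : X → ℝ≥0) (b : ℝ) (F : X → ℝ≥0) (x : X) : ℝ≥0 :=
  κ x ^ b * F (σ x)

/-- conformal polarization -/
noncomputable def pol (σ : X → X) (κ : X → ℝ≥0) (b : ℝ) (F : X → ℝ≥0) (x : X) : ℝ≥0 :=
  if κ x < 1 then max (F x) (cs σ κ b F x) else min (F x) (cs σ κ b F x)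

/-- bilinear energy -/
noncomputable def en (μ : Measure X) (K : X → X → ℝ≥0) (F G : X → ℝ≥0) : ℝ≥0∞ :=
  ∫⁻ x, ∫⁻ y, ((F x * G y * K x y : ℝ≥0) : ℝ≥0∞) ∂μ ∂μ

/-- potential -/
noncomputable def pot (μ : Measure X) (K : X → X → ℝ≥0) (F : X → ℝ≥0) (x : X) : ℝ≥0∞ :=
  ∫⁻ y, ((K x y * F y : ℝ≥0) : ℝ≥0∞) ∂μ

variable {μ : Measure X} {K : X → X → ℝ≥0} {d l b p : ℝ} {σ : X → X} {κ : X → ℝ≥0} {S : Set X}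

lemma ms_cs (h : ConfInv μ K d l σ κ S) {F : X → ℝ≥0} (hF : Measurable F) :
    Measurable (cs σ κ b F) := by
  unfold cs
  exact (h.msκ.pow_const b).mul (hF.comp h.msσ)

lemma ms_pol (h : ConfInv μ K d l σ κ S) {F : X → ℝ≥0} (hF : Measurable F) :
    Measurable (pol σ κ b F) := by
  unfold pol
  exact Measurable.ite (measurableSet_lt h.msκ measurable_const) (hF.max (ms_cs h hF))
    (hF.min (ms_cs h hF))

lemma pol_le {F : X → ℝ≥0} {C : ℝ≥0} (hb : 0 ≤ b) (hF : ∀ x, F x ≤ C) (x : X) :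
    pol σ κ b F x ≤ C := by
  unfold pol
  split_ifs with hx
  · refine max_le (hF x) ?_
    unfold cs
    calc κ x ^ b * F (σ x) ≤ 1 * C := by
          gcongr
          · exact NNReal.rpow_le_one hx.le hb
          · exact hF _
      _ = C := one_mul C
  · exact (min_le_left _ _).trans (hF x)

lemma cs_pol (h : ConfInv μ K d l σ κ S) (F : X → ℝ≥0) {x : X} (hx : x ∈ S) :
    cs σ κ b (pol σ κ b F) x =
      if κ x < 1 then min (F x) (cs σ κ b F x) else max (F x) (cs σ κ b F x) := by
  have h0 := h.pos x hx
  have h1 := h.kne x hx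
  have hk : κ x ^ b * (κ x)⁻¹ ^ b = 1 := by
    rw [← NNReal.mul_rpow, mul_inv_cancel₀ h0.ne', NNReal.one_rpow]
  have key : κ x ^ b * ((κ x)⁻¹ ^ b * F x) = F x := by rw [← mul_assoc, hk, one_mul]
  unfold cs pol cs
  rw [h.kinv x hx, h.inv x hx]
  by_cases hlt : κ x < 1
  · have : ¬ (κ x)⁻¹ < 1 := by
      rw [not_lt]; exact (one_le_inv₀ h0).2 hlt.le
    rw [if_neg this, if_pos hlt, mul_min, key, min_comm]
  · have : (κ x)⁻¹ < 1 := by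
      refine inv_lt_one_of_one_lt₀ (lt_of_le_of_ne (not_lt.1 hlt) (Ne.symm h1))
    rw [if_pos this, if_neg hlt, mul_max, key, max_comm]

/-- one variable change of variables with a kernel -/
lemma cov_cs (h : ConfInv μ K d l σ κ S) (hb : b = d + l) {F : X → ℝ≥0} (hF : Measurable F)
    {φ : X → ℝ≥0} (hφ : Measurable φ) :
    ∫⁻ y, ((F y * φ y : ℝ≥0) : ℝ≥0∞) ∂μ =
      ∫⁻ y, ((cs σ κ b F y * (φ (σ y) * κ y ^ (-l)) : ℝ≥0) : ℝ≥0∞) ∂μ := by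
  have := h.cov (fun y => ((F y * φ y : ℝ≥0) : ℝ≥0∞)) (hF.mul hφ).coe_nnreal_ennreal
  rw [this]
  clear this
  refine lintegral_congr_ae ?_
  filter_upwards [h.ae] with y hy
  have h0 := (h.pos y hy).ne'
  have : κ y ^ b * κ y ^ (-l) = κ y ^ d := by
    rw [← NNReal.rpow_add h0, hb]; ring_nf
  rw [← ENNReal.coe_mul, cs, ← this]
  congr 1
  ring

lemma ksymm2 (h : ConfInv μ K d l σ κ S) {x y : X}
    (hx : x ∈ S) (hy : y ∈ S) :
    K (σ x) y * κ x ^ (-l) = K x (σ y) * κ y ^ (-l) := by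
  have := h.Kconf x hx (σ y) (h.maps y hy)
  rw [h.inv y hy, h.kinv y hy] at this
  rw [this, NNReal.inv_rpow, NNReal.rpow_neg, NNReal.rpow_neg]
  have h0 : κ x ^ l ≠ 0 := by simpa using fun h' => absurd h' (h.pos x hx).ne'
  field_simp

end
end RHLS

namespace RHLS
open MeasureTheory ENNReal
open scoped NNReal
set_option linter.unusedSectionVars false
section
variable {X : Type*} [MeasurableSpace X]
variable {μ : Measure X} {K : X → X → ℝ≥0} {d l b p : ℝ} {σ : X → X} {κ : X → ℝ≥0} {S : Set X}

lemma ms_Kl (hm : Measurable (Function.uncurry K)) (x : X) : Measurable (K x) :=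
  hm.comp measurable_prodMk_left

lemma en_comm [SFinite μ] (hm : Measurable (Function.uncurry K)) (hK : ∀ x y, K x y = K y x)
    {F G : X → ℝ≥0} (hF : Measurable F) (hG : Measurable G) : en μ K F G = en μ K G F := by
  unfold en
  rw [lintegral_lintegral_swap]
  · refine lintegral_congr fun x => lintegral_congr fun y => ?_
    rw [hK y x]; congr 1; ring
  · apply Measurable.aemeasurable
    exact (((hF.comp measurable_fst).mul (hG.comp measurable_snd)).mul hm).coe_nnreal_ennreal

lemma en_one (h : ConfInv μ K d l σ κ S) (hb : b = d + l) (hm : Measurable (Function.uncurry K))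
    {F G : X → ℝ≥0} (hG : Measurable G) :
    en μ K F G = ∫⁻ x, ∫⁻ y, ((F x * cs σ κ b G y * (K x (σ y) * κ y ^ (-l)) : ℝ≥0) : ℝ≥0∞) ∂μ ∂μ := by
  unfold en
  refine lintegral_congr fun x => ?_
  have := cov_cs h hb hG (φ := fun y => F x * K x y) (measurable_const.mul (ms_Kl hm x))
  calc _ = ∫⁻ y, ((G y * (F x * K x y) : ℝ≥0) : ℝ≥0∞) ∂μ :=
        lintegral_congr fun y => by congr 1; ring
    _ = _ := this
    _ = _ := lintegral_congr fun y => by congr 1; ring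

lemma en_two [SFinite μ] (h : ConfInv μ K d l σ κ S) (hb : b = d + l)
    (hm : Measurable (Function.uncurry K))
    (hK : ∀ x y, K x y = K y x) {F G : X → ℝ≥0} (hF : Measurable F) (hG : Measurable G) :
    en μ K F G = ∫⁻ x, ∫⁻ y, ((cs σ κ b F x * G y * (K x (σ y) * κ y ^ (-l)) : ℝ≥0) : ℝ≥0∞) ∂μ ∂μ := by
  rw [en_comm hm hK hF hG, en_one h hb hm hF, lintegral_lintegral_swap]
  · refine lintegral_congr_ae ?_
    filter_upwards [h.ae] with x hx
    refine lintegral_congr_ae ?_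
    filter_upwards [h.ae] with y hy
    rw [hK y (σ x), ksymm2 h hx hy, mul_comm (G y)]
  · apply Measurable.aemeasurable
    refine Measurable.coe_nnreal_ennreal (Measurable.mul (Measurable.mul ?_ ?_) (Measurable.mul ?_ ?_))
    · exact hG.comp measurable_fst
    · exact (ms_cs h hF).comp measurable_snd
    · exact hm.comp (measurable_fst.prodMk (h.msσ.comp measurable_snd))
    · exact (h.msκ.comp measurable_snd).pow_const _

lemma en_three [SFinite μ] (h : ConfInv μ K d l σ κ S) (hb : b = d + l)
    (hm : Measurable (Function.uncurry K))
    (hK : ∀ x y, K x y = K y x) {F G : X → ℝ≥0} (hF : Measurable F) (hG : Measurable G) :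
    en μ K F G = ∫⁻ x, ∫⁻ y, ((cs σ κ b F x * cs σ κ b G y * K x y : ℝ≥0) : ℝ≥0∞) ∂μ ∂μ := by
  rw [en_two h hb hm hK hF hG]
  refine lintegral_congr_ae ?_
  filter_upwards [h.ae] with x hx
  have := cov_cs h hb hG (φ := fun y => cs σ κ b F x * (K (σ x) y * κ x ^ (-l)))
    (measurable_const.mul ((ms_Kl hm (σ x)).mul measurable_const))
  calc _ = ∫⁻ y, ((G y * (cs σ κ b F x * (K (σ x) y * κ x ^ (-l))) : ℝ≥0) : ℝ≥0∞) ∂μ := by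
        refine lintegral_congr_ae ?_
        filter_upwards [h.ae] with y hy
        rw [ksymm2 h hx hy]; congr 1; ring
    _ = _ := this
    _ = _ := by
        refine lintegral_congr_ae ?_
        filter_upwards [h.ae] with y hy
        have h1 : κ x ^ l ≠ 0 := by simpa using fun h' => absurd h' (h.pos x hx).ne'
        have h2 : κ y ^ l ≠ 0 := by simpa using fun h' => absurd h' (h.pos y hy).ne'
        rw [h.Kconf x hx y hy, NNReal.rpow_neg, NNReal.rpow_neg]
        congr 1
        field_simp

lemma en_four [SFinite μ] (h : ConfInv μ K d l σ κ S) (hb : b = d + l)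
    (hm : Measurable (Function.uncurry K))
    (hK : ∀ x y, K x y = K y x) {F G : X → ℝ≥0} (hF : Measurable F) (hG : Measurable G) :
    4 * en μ K F G = ∫⁻ x, ∫⁻ y,
      ((F x * G y * K x y + F x * cs σ κ b G y * (K x (σ y) * κ y ^ (-l))
        + cs σ κ b F x * G y * (K x (σ y) * κ y ^ (-l))
        + cs σ κ b F x * cs σ κ b G y * K x y : ℝ≥0) : ℝ≥0∞) ∂μ ∂μ := by
  have hFs := ms_cs (b := b) h hF
  have hGs := ms_cs (b := b) h hG
  have hm2 : Measurable (fun z : X × X => K z.1 (σ z.2) * κ z.2 ^ (-l)) :=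
    (hm.comp (measurable_fst.prodMk (h.msσ.comp measurable_snd))).mul
      ((h.msκ.comp measurable_snd).pow_const _)
  have e : ∀ {A B : X → ℝ≥0} {k : X → X → ℝ≥0}, Measurable A → Measurable B →
      Measurable (Function.uncurry k) →
      Measurable (fun z : X × X => ((A z.1 * B z.2 * k z.1 z.2 : ℝ≥0) : ℝ≥0∞)) :=
    fun hA hB hk => (((hA.comp measurable_fst).mul (hB.comp measurable_snd)).mul hk).coe_nnreal_ennreal
  have m1 := e hF hG hm
  have m2 := e hF hGs (k := fun x y => K x (σ y) * κ y ^ (-l)) hm2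
  have m3 := e hFs hG (k := fun x y => K x (σ y) * κ y ^ (-l)) hm2
  have m4 := e hFs hGs hm
  have : (4 : ℝ≥0∞) * en μ K F G = en μ K F G + en μ K F G + en μ K F G + en μ K F G := by ring
  rw [this]
  conv_lhs =>
    congr
    · congr
      · congr
        · rw [en]
        · rw [en_one h hb hm hG]
      · rw [en_two h hb hm hK hF hG]
    · rw [en_three h hb hm hK hF hG]
  rw [← lintegral_add_right _ m2.lintegral_prod_right', ← lintegral_add_right _ m3.lintegral_prod_right',
    ← lintegral_add_right _ m4.lintegral_prod_right']
  refine lintegral_congr fun x => ?_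
  have n2 := m2.comp (measurable_prodMk_left (x := x))
  have n3 := m3.comp (measurable_prodMk_left (x := x))
  have n4 := m4.comp (measurable_prodMk_left (x := x))
  simp only [Function.comp_def] at n2 n3 n4
  rw [← lintegral_add_right _ n2, ← lintegral_add_right _ n3,
    ← lintegral_add_right _ n4]
  refine lintegral_congr fun y => ?_
  push_cast
  rfl

lemma four_term {f f' g g' k k' : ℝ≥0} (hk : k ≤ k') :
    max f f' * max g g' * k + max f f' * min g g' * k' + min f f' * max g g' * k'
      + min f f' * min g g' * k ≤
    f * g * k + f * g' * k' + f' * g * k' + f' * g' * k := by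
  obtain ⟨c, rfl⟩ := exists_add_of_le hk
  rcases le_total f f' with h1 | h1 <;> rcases le_total g g' with h2 | h2 <;>
    simp only [max_eq_left, max_eq_right, min_eq_left, min_eq_right, h1, h2] <;>
    obtain ⟨u, rfl⟩ := exists_add_of_le h1 <;> obtain ⟨v, rfl⟩ := exists_add_of_le h2 <;>
    rw [← NNReal.coe_le_coe] <;> push_cast <;>
    have huv := mul_nonneg (mul_nonneg (NNReal.coe_nonneg u) (NNReal.coe_nonneg v)) (NNReal.coe_nonneg c) <;>
    linarith

lemma en_pol [SFinite μ] (h : ConfInv μ K d l σ κ S) (hb : b = d + l)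
    (hm : Measurable (Function.uncurry K))
    (hK : ∀ x y, K x y = K y x) {F G : X → ℝ≥0} (hF : Measurable F) (hG : Measurable G) :
    en μ K (pol σ κ b F) (pol σ κ b G) ≤ en μ K F G := by
  have h4 : (4 : ℝ≥0∞) * en μ K (pol σ κ b F) (pol σ κ b G) ≤ 4 * en μ K F G := by
    rw [en_four h hb hm hK hF hG, en_four h hb hm hK (ms_pol h hF) (ms_pol h hG)]
    refine lintegral_mono_ae ?_
    filter_upwards [h.ae] with x hx
    refine lintegral_mono_ae ?_
    filter_upwards [h.ae] with y hy
    rw [ENNReal.coe_le_coe, cs_pol h F hx, cs_pol h G hy]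
    have hopp : ¬ (κ x < 1 ↔ κ y < 1) → K x (σ y) * κ y ^ (-l) ≤ K x y := by
      intro hne
      have h0 := h.pos y hy
      have h1 := h.kne y hy
      have := h.Ksign x hx (σ y) (h.maps y hy) (by
        rw [h.kinv y hy]
        have : (κ y)⁻¹ < 1 ↔ ¬ κ y < 1 := by
          constructor
          · intro h2 h3
            exact absurd ((one_le_inv₀ h0).2 h3.le) (not_le.2 h2)
          · intro h2
            exact inv_lt_one_of_one_lt₀ (lt_of_le_of_ne (not_lt.1 h2) (Ne.symm h1))
        tauto)
      rw [h.inv y hy, h.kinv y hy] at this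
      calc _ ≤ K x y * (κ y)⁻¹ ^ (-l) * κ y ^ (-l) := by gcongr
        _ = K x y := by
          rw [mul_assoc, ← NNReal.mul_rpow, inv_mul_cancel₀ h0.ne', NNReal.one_rpow, mul_one]
    have hs := h.Ksign x hx y hy
    generalize K x (σ y) * κ y ^ (-l) = k' at *
    generalize K x y = k at *
    unfold pol
    generalize F x = f at *
    generalize G y = g at *
    generalize cs σ κ b F x = f' at *
    generalize cs σ κ b G y = g' at *
    by_cases hx1 : κ x < 1 <;> by_cases hy1 : κ y < 1 <;> simp only [hx1, hy1, if_true, if_false]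
    · exact four_term (hs (by tauto))
    · have := four_term (f := f) (f' := f') (g := g') (g' := g) (hopp (by tauto))
      rw [max_comm g' g, min_comm g' g] at this
      calc _ = _ := by ring
        _ ≤ _ := this
        _ = _ := by ring
    · have := four_term (f := f) (f' := f') (g := g') (g' := g) (hopp (by tauto))
      rw [max_comm g' g, min_comm g' g] at this
      calc _ = _ := by ring
        _ ≤ _ := this
        _ = _ := by ring
    · calc _ = _ := by ring
        _ ≤ _ := four_term (f := f) (f' := f') (g := g) (g' := g') (hs (by tauto))
        _ = _ := by ring
  rwa [ENNReal.mul_le_mul_iff_right (by norm_num) (by norm_num)] at h4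

/-- the polarization preserves `∫ F ^ p` -/
lemma pow_pol (h : ConfInv μ K d l σ κ S) (hp : p * b = d)
    {F : X → ℝ≥0} (hF : Measurable F) :
    ∫⁻ x, ((pol σ κ b F x ^ p : ℝ≥0) : ℝ≥0∞) ∂μ = ∫⁻ x, ((F x ^ p : ℝ≥0) : ℝ≥0∞) ∂μ := by
  have key : ∀ G : X → ℝ≥0, Measurable G → 2 * ∫⁻ x, ((G x ^ p : ℝ≥0) : ℝ≥0∞) ∂μ =
      ∫⁻ x, ((G x ^ p + cs σ κ b G x ^ p : ℝ≥0) : ℝ≥0∞) ∂μ := by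
    intro G hG
    rw [two_mul]
    nth_rewrite 2 [h.cov _ (hG.pow_const p).coe_nnreal_ennreal]
    rw [← lintegral_add_left (hG.pow_const p).coe_nnreal_ennreal]
    refine lintegral_congr fun x => ?_
    rw [← ENNReal.coe_mul, ← ENNReal.coe_add, cs, NNReal.mul_rpow, ← NNReal.rpow_mul, mul_comm b p, hp,
      mul_comm (κ x ^ d)]
  have : (2 : ℝ≥0∞) * ∫⁻ x, ((pol σ κ b F x ^ p : ℝ≥0) : ℝ≥0∞) ∂μ =
      2 * ∫⁻ x, ((F x ^ p : ℝ≥0) : ℝ≥0∞) ∂μ := by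
    rw [key F hF, key _ (ms_pol h hF)]
    refine lintegral_congr_ae ?_
    filter_upwards [h.ae] with x hx
    rw [cs_pol h F hx]
    unfold pol
    split_ifs <;> rcases le_total (F x) (cs σ κ b F x) with h1 | h1 <;> simp [h1, add_comm]
  rwa [ENNReal.mul_right_inj (by norm_num) (by norm_num)] at this

/-- gain in the linear functional -/
lemma lin_pol (h : ConfInv μ K d l σ κ S) (hb : b = d + l) (hl : 0 ≤ l)
    {F : X → ℝ≥0} (hF : Measurable F) :
    2 * ∫⁻ x, (pol σ κ b F x : ℝ≥0∞) ∂μ +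
      ∫⁻ x, (({x | κ x < 1}.indicator (fun x => (κ x ^ (-l) - 1) * (cs σ κ b F x - F x)) x : ℝ≥0) : ℝ≥0∞) ∂μ
      ≤ 2 * ∫⁻ x, (F x : ℝ≥0∞) ∂μ := by
  have key : ∀ G : X → ℝ≥0, Measurable G → 2 * ∫⁻ x, (G x : ℝ≥0∞) ∂μ =
      ∫⁻ x, ((G x + cs σ κ b G x * κ x ^ (-l) : ℝ≥0) : ℝ≥0∞) ∂μ := by
    intro G hG
    have := cov_cs h hb hG (φ := fun _ => 1) measurable_const
    simp only [mul_one, one_mul] at this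
    rw [two_mul]
    nth_rewrite 2 [this]
    rw [← lintegral_add_left hG.coe_nnreal_ennreal]
    rfl
  rw [key F hF, key _ (ms_pol h hF), ← lintegral_add_left]
  swap
  · exact ((ms_pol h hF).add ((ms_cs h (ms_pol h hF)).mul (h.msκ.pow_const _))).coe_nnreal_ennreal
  refine lintegral_mono_ae ?_
  filter_upwards [h.ae] with x hx
  rw [← ENNReal.coe_add, ENNReal.coe_le_coe, cs_pol h F hx]
  unfold pol
  have h0 := h.pos x hx
  by_cases hlt : κ x < 1
  · have h1 : 1 ≤ κ x ^ (-l) := by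
      rw [NNReal.rpow_neg]; exact (one_le_inv₀ (NNReal.rpow_pos h0)).2 (NNReal.rpow_le_one hlt.le hl)
    rw [Set.indicator_of_mem (by exact hlt)]
    simp only [hlt, if_true]
    generalize κ x ^ (-l) = t at *
    obtain ⟨c, rfl⟩ := exists_add_of_le h1
    rw [add_tsub_cancel_left]
    rcases le_total (F x) (cs σ κ b F x) with h1 | h1
    · obtain ⟨u, hu⟩ := exists_add_of_le h1
      rw [max_eq_right h1, min_eq_left h1, hu, add_tsub_cancel_left]
      apply le_of_eq; ring
    · rw [max_eq_left h1, min_eq_right h1, tsub_eq_zero_of_le h1]; simp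
  · rw [Set.indicator_of_notMem (by exact hlt)]
    simp only [hlt, if_false, add_zero]
    have h1 : κ x ^ (-l) ≤ 1 := by
      rw [NNReal.rpow_neg]
      exact inv_le_one_of_one_le₀ (NNReal.one_le_rpow (not_lt.1 hlt) hl)
    generalize κ x ^ (-l) = t at *
    obtain ⟨c, hc⟩ := exists_add_of_le h1
    rcases le_total (F x) (cs σ κ b F x) with h1 | h1
    · rw [max_eq_right h1, min_eq_left h1]
    · rw [max_eq_left h1, min_eq_right h1]
      obtain ⟨u, hu⟩ := exists_add_of_le h1
      rw [hu]
      calc _ = cs σ κ b F x + cs σ κ b F x * t + u * t := by ring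
        _ ≤ cs σ κ b F x + cs σ κ b F x * t + u * (t + c) := by gcongr; exact le_self_add
        _ = _ := by rw [← hc]; ring

end
end RHLS

namespace RHLS
open MeasureTheory ENNReal Filter Topology
open scoped NNReal
set_option linter.unusedSectionVars false
section
variable {X : Type*} [MeasurableSpace X]
variable {μ : Measure X} {K : X → X → ℝ≥0} {d l b p : ℝ} {σ : X → X} {κ : X → ℝ≥0} {S : Set X}

/-- the defect of being ordered -/
noncomputable def defect (σ : X → X) (κ : X → ℝ≥0) (b : ℝ) (F : X → ℝ≥0) (x : X) : ℝ≥0 :=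
  {x | κ x < 1}.indicator (fun x => cs σ κ b F x - F x) x

lemma ms_defect (h : ConfInv μ K d l σ κ S) {F : X → ℝ≥0} (hF : Measurable F) :
    Measurable (defect σ κ b F) := by
  unfold defect
  exact ((ms_cs h hF).sub hF).indicator (measurableSet_lt h.msκ measurable_const)

lemma defect_le {F : X → ℝ≥0} {C : ℝ≥0} (hb : 0 ≤ b) (hF : ∀ x, F x ≤ C) (x : X) :
    defect σ κ b F x ≤ C := by
  unfold defect
  by_cases hx : κ x < 1
  · rw [Set.indicator_of_mem (by exact hx)]
    refine tsub_le_self.trans ?_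
    unfold cs
    calc κ x ^ b * F (σ x) ≤ 1 * C := by
          gcongr
          · exact NNReal.rpow_le_one hx.le hb
          · exact hF _
      _ = C := one_mul C
  · rw [Set.indicator_of_notMem (by exact hx)]; exact zero_le

lemma tendsto_of_weight [IsFiniteMeasure μ] {D : ℕ → X → ℝ≥0} {W : X → ℝ≥0} {A : Set X} {C : ℝ≥0}
    (hA : MeasurableSet A)
    (hD : ∀ k, Measurable (D k)) (hW : Measurable W) (hC : ∀ k x, D k x ≤ C)
    (hDA : ∀ k, ∀ x ∉ A, D k x = 0) (hWA : ∀ᵐ x ∂μ, x ∈ A → 0 < W x)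
    (hlim : Tendsto (fun k => ∫⁻ x, ((W x * D k x : ℝ≥0) : ℝ≥0∞) ∂μ) atTop (𝓝 0)) :
    Tendsto (fun k => ∫⁻ x, (D k x : ℝ≥0∞) ∂μ) atTop (𝓝 0) := by
  have h1 : Tendsto (fun j : ℕ => ∫⁻ x, ((A ∩ {x | (j : ℝ≥0) * W x < 1}).indicator (fun _ => (C : ℝ≥0∞)) x) ∂μ)
      atTop (𝓝 (∫⁻ x, 0 ∂μ)) := by
    refine tendsto_lintegral_of_dominated_convergence (fun _ => (C : ℝ≥0∞)) ?_ ?_ ?_ ?_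
    · intro j
      exact measurable_const.indicator (hA.inter (measurableSet_lt (measurable_const.mul hW) measurable_const))
    · intro j
      filter_upwards with x
      exact Set.indicator_le_self' (fun _ _ => zero_le) x
    · simp [ENNReal.mul_eq_top]
    · filter_upwards [hWA] with x hx
      by_cases hxA : x ∈ A
      · have hw := hx hxA
        obtain ⟨j0, hj0⟩ := exists_nat_ge ((W x)⁻¹)
        refine tendsto_const_nhds.congr' ?_
        filter_upwards [eventually_ge_atTop j0] with j hj
        rw [Set.indicator_of_notMem]
        rintro ⟨_, h2⟩
        have h3 : (W x)⁻¹ ≤ (j : ℝ≥0) := hj0.trans (by exact_mod_cast hj)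
        have : 1 ≤ (j : ℝ≥0) * W x := by
          calc 1 = (W x)⁻¹ * W x := (inv_mul_cancel₀ hw.ne').symm
            _ ≤ _ := by gcongr
        exact absurd h2 (not_lt.2 this)
      · refine tendsto_const_nhds.congr ?_
        intro j
        rw [Set.indicator_of_notMem]
        exact fun h => hxA h.1
  rw [lintegral_zero] at h1
  rw [ENNReal.tendsto_nhds_zero] at h1 ⊢
  intro ε hε
  have hε2 : 0 < ε / 2 := ENNReal.half_pos hε.ne'
  obtain ⟨j, hj⟩ := (h1 (ε / 2) hε2).exists
  have h2 : Tendsto (fun k => (j : ℝ≥0∞) * ∫⁻ x, ((W x * D k x : ℝ≥0) : ℝ≥0∞) ∂μ) atTop (𝓝 ((j : ℝ≥0∞) * 0)) :=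
    ENNReal.Tendsto.const_mul hlim (Or.inr (ENNReal.natCast_ne_top j))
  rw [mul_zero, ENNReal.tendsto_nhds_zero] at h2
  filter_upwards [h2 (ε / 2) hε2] with k hk
  have hms : Measurable (fun x => ((W x * D k x : ℝ≥0) : ℝ≥0∞)) := (hW.mul (hD k)).coe_nnreal_ennreal
  calc ∫⁻ x, (D k x : ℝ≥0∞) ∂μ ≤ ∫⁻ x, ((j : ℝ≥0∞) * ((W x * D k x : ℝ≥0) : ℝ≥0∞) +
        (A ∩ {x | (j : ℝ≥0) * W x < 1}).indicator (fun _ => (C : ℝ≥0∞)) x) ∂μ := by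
        refine lintegral_mono fun x => ?_
        by_cases hxA : x ∈ A
        · by_cases hx : (j : ℝ≥0) * W x < 1
          · rw [Set.indicator_of_mem (by exact ⟨hxA, hx⟩)]
            exact le_trans (ENNReal.coe_le_coe.2 (hC k x)) le_add_self
          · refine le_trans ?_ le_self_add
            have : D k x ≤ (j : ℝ≥0) * (W x * D k x) := by
              rw [← mul_assoc]
              calc D k x = 1 * D k x := (one_mul _).symm
                _ ≤ _ := by gcongr; exact not_lt.1 hx
            calc ((D k x : ℝ≥0) : ℝ≥0∞) ≤ (((j : ℝ≥0) * (W x * D k x) : ℝ≥0) : ℝ≥0∞) := ENNReal.coe_le_coe.2 this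
              _ = _ := by rw [ENNReal.coe_mul, ENNReal.coe_natCast]
        · rw [hDA k x hxA]; simp
    _ = (j : ℝ≥0∞) * ∫⁻ x, ((W x * D k x : ℝ≥0) : ℝ≥0∞) ∂μ + _ := by
        rw [lintegral_add_left (hms.const_mul _), lintegral_const_mul _ hms]
    _ ≤ ε / 2 + ε / 2 := add_le_add hk hj
    _ = ε := ENNReal.add_halves ε

/-- admissible class -/
def cls (μ : Measure X) (p : ℝ) (C : ℝ≥0) : Set (X → ℝ≥0) :=
  {F | Measurable F ∧ (∀ x, F x ≤ C) ∧ ∫⁻ x, ((F x ^ p : ℝ≥0) : ℝ≥0∞) ∂μ = 1}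

/-- penalized functional -/
noncomputable def psi (μ : Measure X) (K : X → X → ℝ≥0) (ε : ℝ≥0) (F G : X → ℝ≥0) : ℝ≥0∞ :=
  en μ K F G + ε * ∫⁻ x, (F x : ℝ≥0∞) ∂μ

lemma step1 [IsFiniteMeasure μ] (h : ConfInv μ K d l σ κ S) (hb : b = d + l) (hb0 : 0 ≤ b)
    (hl : 0 < l) (hp : p * b = d)
    (hm : Measurable (Function.uncurry K))
    (hK : ∀ x y, K x y = K y x) {ε C : ℝ≥0} (hε : 0 < ε) {F G : ℕ → X → ℝ≥0}
    (hF : ∀ k, F k ∈ cls μ p C) (hG : ∀ k, G k ∈ cls μ p C) {m : ℝ≥0∞} (hmtop : m ≠ ∞)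
    (hmin : ∀ F ∈ cls μ p C, ∀ G ∈ cls μ p C, m ≤ psi μ K ε F G)
    (hlim : Tendsto (fun k => psi μ K ε (F k) (G k)) atTop (𝓝 m)) :
    Tendsto (fun k => ∫⁻ x, (defect σ κ b (F k) x : ℝ≥0∞) ∂μ) atTop (𝓝 0) := by
  have hpol : ∀ H ∈ cls μ p C, pol σ κ b H ∈ cls μ p C := fun H hH =>
    ⟨ms_pol h hH.1, pol_le hb0 hH.2.1, (pow_pol h hp hH.1).trans hH.2.2⟩
  have hε' : (ε : ℝ≥0∞) ≠ 0 := by simpa using hε.ne'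
  refine tendsto_of_weight (A := {x | κ x < 1}) (W := fun x => κ x ^ (-l) - 1)
    (measurableSet_lt h.msκ measurable_const) (fun k => ms_defect h (hF k).1)
    ((h.msκ.pow_const _).sub measurable_const) (fun k => defect_le hb0 (hF k).2.1) ?_ ?_ ?_
  · intro k x hx
    exact Set.indicator_of_notMem hx _
  · filter_upwards [h.ae] with x hx hlt
    rw [tsub_pos_iff_lt, NNReal.rpow_neg]
    exact (one_lt_inv₀ (NNReal.rpow_pos (h.pos x hx))).2 (NNReal.rpow_lt_one hlt hl)
  · have h2 : Tendsto (fun k => (2 * psi μ K ε (F k) (G k) - 2 * m) * (ε : ℝ≥0∞)⁻¹) atTop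
        (𝓝 ((2 * m - 2 * m) * (ε : ℝ≥0∞)⁻¹)) := by
      refine ENNReal.Tendsto.mul_const ?_ (Or.inr (by simpa using hε.ne'))
      refine ENNReal.Tendsto.sub ?_ tendsto_const_nhds (Or.inl (by finiteness))
      exact ENNReal.Tendsto.const_mul hlim (Or.inr (by norm_num))
    rw [tsub_self, zero_mul] at h2
    refine tendsto_of_tendsto_of_tendsto_of_le_of_le tendsto_const_nhds h2 (fun k => zero_le) ?_
    intro k
    show _ ≤ (2 * psi μ K ε (F k) (G k) - 2 * m) * (ε : ℝ≥0∞)⁻¹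
    rw [← div_eq_mul_inv, ENNReal.le_div_iff_mul_le (Or.inl hε') (Or.inl (by simp))]
    refine ENNReal.le_sub_of_add_le_left (by finiteness) ?_
    have g := lin_pol h hb hl.le (hF k).1
    have e1 := en_pol h hb hm hK (hF k).1 (hG k).1
    have e2 := hmin _ (hpol _ (hF k)) _ (hpol _ (hG k))
    have e3 : (∫⁻ x, (({x | κ x < 1}.indicator (fun x => (κ x ^ (-l) - 1) * (cs σ κ b (F k) x - F k x)) x : ℝ≥0) : ℝ≥0∞) ∂μ)
        = ∫⁻ x, (((κ x ^ (-l) - 1) * defect σ κ b (F k) x : ℝ≥0) : ℝ≥0∞) ∂μ := by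
      refine lintegral_congr fun x => ?_
      unfold defect
      rw [Set.indicator_mul_right _ (fun x => κ x ^ (-l) - 1)]
    rw [e3] at g
    calc _ ≤ 2 * psi μ K ε (pol σ κ b (F k)) (pol σ κ b (G k)) + _ := by gcongr
      _ = 2 * en μ K (pol σ κ b (F k)) (pol σ κ b (G k)) + ε * (2 * ∫⁻ x, (pol σ κ b (F k) x : ℝ≥0∞) ∂μ
          + ∫⁻ x, (((κ x ^ (-l) - 1) * defect σ κ b (F k) x : ℝ≥0) : ℝ≥0∞) ∂μ) := by
          unfold psi; ring
      _ ≤ 2 * en μ K (F k) (G k) + ε * (2 * ∫⁻ x, (F k x : ℝ≥0∞) ∂μ) := by gcongr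
      _ = _ := by unfold psi; ring

/-- Approximation of a symmetry sending `x'` to `x` -/
def Approx (μ : Measure X) (K : X → X → ℝ≥0) (d l : ℝ) (x x' : X) : Prop :=
  ∀ η : ℝ≥0∞, 0 < η → ∃ σ₁ κ₁ S₁ σ₂ κ₂ S₂, ConfInv μ K d l σ₁ κ₁ S₁ ∧ ConfInv μ K d l σ₂ κ₂ S₂ ∧
    ∃ e : X → ℝ≥0∞, Measurable e ∧ ∫⁻ y, e y ∂μ ≤ η ∧
      (∀ᵐ y ∂μ, (K x' y : ℝ≥0∞) ≤ ((({y | 1 < κ₁ y}.indicator (fun y => K x (σ₁ y) * κ₁ y ^ (-l)) y +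
        {y | 1 < κ₂ y}.indicator (fun y => K x (σ₂ y) * κ₂ y ^ (-l)) y : ℝ≥0)) : ℝ≥0∞) + e y) ∧
      (∀ᵐ y ∂μ, {y | κ₁ y < 1}.indicator (fun _ => (1 : ℝ≥0∞)) y +
        {y | κ₂ y < 1}.indicator (fun _ => (1 : ℝ≥0∞)) y ≤ 1 + e y)

lemma half_int (h : ConfInv μ K d l σ κ S) (hb : b = d + l)
    (hm : Measurable (Function.uncurry K)) {F : X → ℝ≥0} (hF : Measurable F) {C' : ℝ≥0} {x : X}
    (hKC : ∀ x y, K x y ≤ C') :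
    ∫⁻ y, ((F y * {y | 1 < κ y}.indicator (fun y => K x (σ y) * κ y ^ (-l)) y : ℝ≥0) : ℝ≥0∞) ∂μ ≤
    ∫⁻ y, ({y | κ y < 1}.indicator (fun _ => (1 : ℝ≥0∞)) y * ((K x y * F y : ℝ≥0) : ℝ≥0∞)) ∂μ
      + C' * ∫⁻ y, (defect σ κ b F y : ℝ≥0∞) ∂μ := by
  have hA : MeasurableSet {y | κ y < 1} := measurableSet_lt h.msκ measurable_const
  have hA' : MeasurableSet {y | 1 < κ y} := measurableSet_lt measurable_const h.msκ
  have hφ : Measurable ({y | 1 < κ y}.indicator (fun y => K x (σ y) * κ y ^ (-l))) :=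
    (((ms_Kl hm x).comp h.msσ).mul (h.msκ.pow_const _)).indicator hA'
  rw [cov_cs h hb hF hφ]
  rw [← lintegral_const_mul _ (ms_defect h hF).coe_nnreal_ennreal, ← lintegral_add_right _
    (Measurable.const_mul (ms_defect h hF).coe_nnreal_ennreal _)]
  refine lintegral_mono_ae ?_
  filter_upwards [h.ae] with y hy
  have h0 := h.pos y hy
  by_cases hlt : κ y < 1
  · have h1 : 1 < κ (σ y) := by rw [h.kinv y hy]; exact (one_lt_inv₀ h0).2 hlt
    rw [Set.indicator_of_mem (by exact h1), Set.indicator_of_mem (by exact hlt), one_mul,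
      h.inv y hy, h.kinv y hy]
    have : K x y * (κ y)⁻¹ ^ (-l) * κ y ^ (-l) = K x y := by
      rw [mul_assoc, ← NNReal.mul_rpow, inv_mul_cancel₀ h0.ne', NNReal.one_rpow, mul_one]
    rw [this]
    have hd : cs σ κ b F y ≤ F y + defect σ κ b F y := by
      unfold defect
      rw [Set.indicator_of_mem (by exact hlt)]
      exact le_add_tsub
    have : cs σ κ b F y * K x y ≤ K x y * F y + C' * defect σ κ b F y := by
      calc _ ≤ (F y + defect σ κ b F y) * K x y := by gcongr
        _ = K x y * F y + K x y * defect σ κ b F y := by ring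
        _ ≤ _ := by gcongr; exact hKC x y
    exact_mod_cast this
  · have h1 : ¬ 1 < κ (σ y) := by
      rw [h.kinv y hy, not_lt]; exact inv_le_one_of_one_le₀ (not_lt.1 hlt)
    rw [Set.indicator_of_notMem (by exact h1)]
    simp

lemma step2 [IsFiniteMeasure μ] (hb : b = d + l) (hb0 : 0 ≤ b)
    (hl : 0 < l) (hp : p * b = d)
    (hm : Measurable (Function.uncurry K))
    (hK : ∀ x y, K x y = K y x) {ε C C' : ℝ≥0} (hKC : ∀ x y, K x y ≤ C') (hε : 0 < ε)
    {F G : ℕ → X → ℝ≥0}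
    (hF : ∀ k, F k ∈ cls μ p C) (hG : ∀ k, G k ∈ cls μ p C) {m : ℝ≥0∞} (hmtop : m ≠ ∞)
    (hmin : ∀ F ∈ cls μ p C, ∀ G ∈ cls μ p C, m ≤ psi μ K ε F G)
    (hlim : Tendsto (fun k => psi μ K ε (F k) (G k)) atTop (𝓝 m)) {x x' : X}
    (ha : Approx μ K d l x x') :
    Tendsto (fun k => pot μ K (F k) x' - pot μ K (F k) x) atTop (𝓝 0) := by
  rw [ENNReal.tendsto_nhds_zero]
  intro δ hδ
  rcases eq_or_ne δ ∞ with rfl | hδt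
  · simp
  have hδ2 : 0 < δ / 2 := ENNReal.half_pos hδ.ne'
  set M : ℝ≥0∞ := (C : ℝ≥0∞) + (C' * C : ℝ≥0) + 1 with hM
  have hMt : M ≠ ∞ := by rw [hM]; finiteness
  have hM0 : M ≠ 0 := by simp [hM]
  obtain ⟨σ₁, κ₁, S₁, σ₂, κ₂, S₂, h₁, h₂, e, hem, he, he1, he2⟩ := ha (δ / 2 / M)
    (ENNReal.div_pos hδ2.ne' hMt)
  have t1 := step1 h₁ hb hb0 hl hp hm hK hε hF hG hmtop hmin hlim
  have t2 := step1 h₂ hb hb0 hl hp hm hK hε hF hG hmtop hmin hlim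
  have t3 := ENNReal.Tendsto.const_mul (t1.add t2) (a := (C' : ℝ≥0∞)) (Or.inr (by simp))
  rw [add_zero, mul_zero, ENNReal.tendsto_nhds_zero] at t3
  filter_upwards [t3 (δ / 2) hδ2] with k hk
  rw [tsub_le_iff_left]
  have hFm := (hF k).1
  have hFC := (hF k).2.1
  have a1 := half_int h₁ hb hm hFm (x := x) hKC
  have a2 := half_int h₂ hb hm hFm (x := x) hKC
  have hA₁ : MeasurableSet {y | κ₁ y < 1} := measurableSet_lt h₁.msκ measurable_const
  have hA₂ : MeasurableSet {y | κ₂ y < 1} := measurableSet_lt h₂.msκ measurable_const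
  have hB₁ : MeasurableSet {y | 1 < κ₁ y} := measurableSet_lt measurable_const h₁.msκ
  have hB₂ : MeasurableSet {y | 1 < κ₂ y} := measurableSet_lt measurable_const h₂.msκ
  have hk1 : Measurable ({y | 1 < κ₁ y}.indicator (fun y => K x (σ₁ y) * κ₁ y ^ (-l))) :=
    (((ms_Kl hm x).comp h₁.msσ).mul (h₁.msκ.pow_const _)).indicator hB₁
  have hk2 : Measurable ({y | 1 < κ₂ y}.indicator (fun y => K x (σ₂ y) * κ₂ y ^ (-l))) :=
    (((ms_Kl hm x).comp h₂.msσ).mul (h₂.msκ.pow_const _)).indicator hB₂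
  have hKF : Measurable (fun y => ((K x y * F k y : ℝ≥0) : ℝ≥0∞)) :=
    ((ms_Kl hm x).mul hFm).coe_nnreal_ennreal
  have b1 : pot μ K (F k) x' ≤
      ∫⁻ y, ((F k y * {y | 1 < κ₁ y}.indicator (fun y => K x (σ₁ y) * κ₁ y ^ (-l)) y : ℝ≥0) : ℝ≥0∞) ∂μ +
      ∫⁻ y, ((F k y * {y | 1 < κ₂ y}.indicator (fun y => K x (σ₂ y) * κ₂ y ^ (-l)) y : ℝ≥0) : ℝ≥0∞) ∂μ +
      C * ∫⁻ y, e y ∂μ := by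
    have hq : Measurable (fun y => ((F k y * {y | 1 < κ₁ y}.indicator (fun y => K x (σ₁ y) * κ₁ y ^ (-l)) y : ℝ≥0) : ℝ≥0∞)) :=
      (hFm.mul hk1).coe_nnreal_ennreal
    rw [← lintegral_add_left hq, ← lintegral_const_mul _ hem,
      ← lintegral_add_right _ (hem.const_mul _)]
    refine lintegral_mono_ae ?_
    filter_upwards [he1] with y hy
    push_cast at hy ⊢
    have hc : (F k y : ℝ≥0∞) ≤ C := by exact_mod_cast hFC y
    calc _ ≤ _ * (F k y : ℝ≥0∞) := mul_le_mul_left hy _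
      _ = _ + e y * F k y := by rw [add_mul]
      _ ≤ _ + e y * C := by gcongr
      _ = _ := by ring
  have b2 : ∫⁻ y, ({y | κ₁ y < 1}.indicator (fun _ => (1 : ℝ≥0∞)) y * ((K x y * F k y : ℝ≥0) : ℝ≥0∞)) ∂μ
      + ∫⁻ y, ({y | κ₂ y < 1}.indicator (fun _ => (1 : ℝ≥0∞)) y * ((K x y * F k y : ℝ≥0) : ℝ≥0∞)) ∂μ
      ≤ pot μ K (F k) x + (C' * C : ℝ≥0) * ∫⁻ y, e y ∂μ := by
    have hq : Measurable (fun y => {y | κ₁ y < 1}.indicator (fun _ => (1 : ℝ≥0∞)) y * ((K x y * F k y : ℝ≥0) : ℝ≥0∞)) :=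
      (measurable_const.indicator hA₁).mul hKF
    rw [← lintegral_add_left hq, ← lintegral_const_mul _ hem, pot,
      ← lintegral_add_right _ (hem.const_mul _)]
    refine lintegral_mono_ae ?_
    filter_upwards [he2] with y hy
    have hc : ((K x y * F k y : ℝ≥0) : ℝ≥0∞) ≤ (C' * C : ℝ≥0) := by
      exact_mod_cast mul_le_mul' (hKC x y) (hFC y)
    rw [← add_mul]
    calc _ ≤ (1 + e y) * ((K x y * F k y : ℝ≥0) : ℝ≥0∞) := mul_le_mul_left hy _
      _ = ((K x y * F k y : ℝ≥0) : ℝ≥0∞) + e y * ((K x y * F k y : ℝ≥0) : ℝ≥0∞) := by ring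
      _ ≤ ((K x y * F k y : ℝ≥0) : ℝ≥0∞) + e y * (C' * C : ℝ≥0) := by gcongr
      _ = _ := by ring
  calc pot μ K (F k) x' ≤ _ := b1
    _ ≤ _ := add_le_add (add_le_add a1 a2) le_rfl
    _ = (∫⁻ y, ({y | κ₁ y < 1}.indicator (fun _ => (1 : ℝ≥0∞)) y * ((K x y * F k y : ℝ≥0) : ℝ≥0∞)) ∂μ
      + ∫⁻ y, ({y | κ₂ y < 1}.indicator (fun _ => (1 : ℝ≥0∞)) y * ((K x y * F k y : ℝ≥0) : ℝ≥0∞)) ∂μ)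
      + C * ∫⁻ y, e y ∂μ + C' * (∫⁻ y, (defect σ₁ κ₁ b (F k) y : ℝ≥0∞) ∂μ +
        ∫⁻ y, (defect σ₂ κ₂ b (F k) y : ℝ≥0∞) ∂μ) := by ring
    _ ≤ (pot μ K (F k) x + (C' * C : ℝ≥0) * ∫⁻ y, e y ∂μ) + C * ∫⁻ y, e y ∂μ + δ / 2 := by gcongr
    _ ≤ pot μ K (F k) x + M * ∫⁻ y, e y ∂μ + δ / 2 := by
        rw [add_assoc (pot μ K (F k) x), ← add_mul]
        gcongr
        rw [hM, add_comm (C : ℝ≥0∞)]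
        exact le_self_add
    _ ≤ pot μ K (F k) x + M * (δ / 2 / M) + δ / 2 := by gcongr
    _ = pot μ K (F k) x + δ := by
        rw [ENNReal.mul_div_cancel hM0 hMt, add_assoc, ENNReal.add_halves]

end
end RHLS

namespace RHLS
open MeasureTheory ENNReal Filter Topology
open scoped NNReal
set_option linter.unusedSectionVars false
section
variable {X : Type*} [MeasurableSpace X]
variable {μ : Measure X} {K : X → X → ℝ≥0} {d l b p : ℝ}

lemma ms_pot [SFinite μ] (hm : Measurable (Function.uncurry K)) {F : X → ℝ≥0} (hF : Measurable F) :
    Measurable (pot μ K F) := by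
  unfold pot
  refine Measurable.lintegral_prod_right' (f := fun z : X × X => ((K z.1 z.2 * F z.2 : ℝ≥0) : ℝ≥0∞)) ?_
  exact (Measurable.mul hm (hF.comp measurable_snd)).coe_nnreal_ennreal

lemma pot_le {F : X → ℝ≥0} {C C' : ℝ≥0} (hKC : ∀ x y, K x y ≤ C') (hF : ∀ x, F x ≤ C) (x : X) :
    pot μ K F x ≤ (C' * C : ℝ≥0) * μ Set.univ := by
  unfold pot
  calc _ ≤ ∫⁻ _, ((C' * C : ℝ≥0) : ℝ≥0∞) ∂μ :=
        lintegral_mono fun y => ENNReal.coe_le_coe.2 (mul_le_mul' (hKC x y) (hF y))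
    _ = _ := by rw [lintegral_const]

lemma int_le {F : X → ℝ≥0} {C : ℝ≥0} (hF : ∀ x, F x ≤ C) :
    ∫⁻ x, (F x : ℝ≥0∞) ∂μ ≤ C * μ Set.univ := by
  calc _ ≤ ∫⁻ _, (C : ℝ≥0∞) ∂μ := lintegral_mono fun y => ENNReal.coe_le_coe.2 (hF y)
    _ = _ := by rw [lintegral_const]

lemma en_eq_pot (hm : Measurable (Function.uncurry K)) {F G : X → ℝ≥0} (hF : Measurable F) :
    en μ K G F = ∫⁻ x, G x * pot μ K F x ∂μ := by
  unfold en pot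
  refine lintegral_congr fun x => ?_
  have hq : Measurable (fun y => ((K x y * F y : ℝ≥0) : ℝ≥0∞)) :=
    ((ms_Kl hm x).mul hF).coe_nnreal_ennreal
  rw [← lintegral_const_mul _ hq]
  refine lintegral_congr fun y => ?_
  rw [← ENNReal.coe_mul]; congr 1; ring

lemma step3 [IsFiniteMeasure μ] (hm : Measurable (Function.uncurry K))
    (hK : ∀ x y, K x y = K y x) {C : ℝ≥0} {F G : X → ℝ≥0} (hF : F ∈ cls μ p C) (hG : G ∈ cls μ p C)
    (o : X) {T : ℝ≥0∞} (hT : ∀ x, pot μ K (fun _ => 1) x = T) :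
    T * ((∫⁻ x, (F x : ℝ≥0∞) ∂μ) * ∫⁻ x, (G x : ℝ≥0∞) ∂μ) ≤
      μ Set.univ * (en μ K F G + C * ∫⁻ x, (pot μ K F o - pot μ K F x) ∂μ) +
      (∫⁻ x, (pot μ K F x - pot μ K F o) ∂μ) * (C * μ Set.univ) := by
  have hFm := hF.1
  have hGm := hG.1
  have hp := ms_pot (μ := μ) hm hFm
  have a1 : (∫⁻ x, (G x : ℝ≥0∞) ∂μ) * pot μ K F o ≤ en μ K F G + C * ∫⁻ x, (pot μ K F o - pot μ K F x) ∂μ := by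
    have hq : Measurable (fun x => pot μ K F o - pot μ K F x) := measurable_const.sub hp
    have hq' : Measurable (fun x => (G x : ℝ≥0∞) * pot μ K F x) := hGm.coe_nnreal_ennreal.mul hp
    rw [en_comm hm hK hFm hGm, en_eq_pot hm hFm, ← lintegral_mul_const _ hGm.coe_nnreal_ennreal,
      ← lintegral_const_mul _ hq, ← lintegral_add_left hq']
    refine lintegral_mono fun x => ?_
    calc (G x : ℝ≥0∞) * pot μ K F o ≤ G x * (pot μ K F x + (pot μ K F o - pot μ K F x)) := by
          gcongr; exact le_add_tsub
      _ = G x * pot μ K F x + G x * (pot μ K F o - pot μ K F x) := mul_add _ _ _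
      _ ≤ _ := by
        refine add_le_add le_rfl (mul_le_mul_left ?_ _)
        exact ENNReal.coe_le_coe.2 (hG.2.1 x)
  have a2 : T * ∫⁻ x, (F x : ℝ≥0∞) ∂μ ≤ pot μ K F o * μ Set.univ + ∫⁻ x, (pot μ K F x - pot μ K F o) ∂μ := by
    have e1 : en μ K F (fun _ => 1) = T * ∫⁻ x, (F x : ℝ≥0∞) ∂μ := by
      rw [en_eq_pot hm measurable_const]
      simp only [hT]
      rw [lintegral_mul_const _ hFm.coe_nnreal_ennreal, mul_comm]
    have e2 : en μ K F (fun _ => 1) = ∫⁻ x, pot μ K F x ∂μ := by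
      rw [en_comm hm hK hFm measurable_const, en_eq_pot hm hFm]
      simp
    rw [← e1, e2, ← lintegral_const, ← lintegral_add_left measurable_const]
    exact lintegral_mono fun x => le_add_tsub
  calc _ = (T * ∫⁻ x, (F x : ℝ≥0∞) ∂μ) * ∫⁻ x, (G x : ℝ≥0∞) ∂μ := by ring
    _ ≤ (pot μ K F o * μ Set.univ + ∫⁻ x, (pot μ K F x - pot μ K F o) ∂μ) * ∫⁻ x, (G x : ℝ≥0∞) ∂μ := by
        gcongr
    _ = μ Set.univ * ((∫⁻ x, (G x : ℝ≥0∞) ∂μ) * pot μ K F o) +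
        (∫⁻ x, (pot μ K F x - pot μ K F o) ∂μ) * ∫⁻ x, (G x : ℝ≥0∞) ∂μ := by ring
    _ ≤ _ := add_le_add (mul_le_mul_right a1 _) (mul_le_mul_right (int_le hG.2.1) _)

lemma holder [IsFiniteMeasure μ] (hp0 : 0 < p) (hp1 : p < 1) {F : X → ℝ≥0} (hF : Measurable F)
    (h : ∫⁻ x, ((F x ^ p : ℝ≥0) : ℝ≥0∞) ∂μ = 1) :
    1 ≤ (∫⁻ x, (F x : ℝ≥0∞) ∂μ) * μ Set.univ ^ (1 / p - 1) := by
  have hpq : (1 / p).HolderConjugate (1 / (1 - p)) := by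
    rw [Real.holderConjugate_iff]
    refine ⟨by rw [one_div]; exact (one_lt_inv₀ hp0).2 hp1, by simp⟩
  have := ENNReal.lintegral_mul_le_Lp_mul_Lq μ hpq (f := fun x => ((F x ^ p : ℝ≥0) : ℝ≥0∞)) (g := fun _ => 1)
    (hF.pow_const p).coe_nnreal_ennreal.aemeasurable aemeasurable_const
  simp only [Pi.mul_apply, mul_one, h, ENNReal.one_rpow, lintegral_const, one_mul, one_div_one_div] at this
  have e : ∀ x, ((F x ^ p : ℝ≥0) : ℝ≥0∞) ^ (1 / p) = F x := by
    intro x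
    rw [ENNReal.coe_rpow_of_nonneg _ hp0.le, ← ENNReal.rpow_mul, mul_one_div_cancel hp0.ne', ENNReal.rpow_one]
  simp only [e] at this
  have h2 := ENNReal.rpow_le_rpow this (z := 1 / p) (by positivity)
  rw [ENNReal.one_rpow, ENNReal.mul_rpow_of_nonneg _ _ (by positivity), ← ENNReal.rpow_mul, ← ENNReal.rpow_mul,
    mul_one_div_cancel hp0.ne', ENNReal.rpow_one] at h2
  have : (1 - p) * (1 / p) = 1 / p - 1 := by field_simp
  rwa [this] at h2

lemma en_ne_top [IsFiniteMeasure μ] {C C' : ℝ≥0} (hm : Measurable (Function.uncurry K))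
    (hKC : ∀ x y, K x y ≤ C') {F G : X → ℝ≥0}
    (hG : ∀ x, G x ≤ C) (hFm : Measurable F)  (hF : ∀ x, F x ≤ C) : en μ K G F ≠ ∞ := by
  rw [en_eq_pot hm hFm]
  refine ne_top_of_le_ne_top (b := ∫⁻ _, (C : ℝ≥0∞) * ((C' * C : ℝ≥0) * μ Set.univ) ∂μ) ?_ ?_
  · rw [lintegral_const]; finiteness
  · exact lintegral_mono fun x => mul_le_mul' (ENNReal.coe_le_coe.2 (hG x)) (pot_le hKC hF x)

theorem abstract_main [IsFiniteMeasure μ] (hb : b = d + l) (hb0 : 0 ≤ b)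
    (hl : 0 < l) (hp : p * b = d) (hp0 : 0 < p) (hp1 : p < 1)
    (hm : Measurable (Function.uncurry K))
    (hK : ∀ x y, K x y = K y x) {C C' : ℝ≥0} (hKC : ∀ x y, K x y ≤ C')
    {o : X} (hA : ∀ᵐ x ∂μ, Approx μ K d l x o ∧ Approx μ K d l o x)
    {T : ℝ≥0∞} (hT : ∀ x, pot μ K (fun _ => 1) x = T)
    {F G : X → ℝ≥0} (hF : F ∈ cls μ p C) (hG : G ∈ cls μ p C) :
    T ≤ μ Set.univ ^ (2 / p - 1) * en μ K F G := by
  have key : ∀ ε : ℝ≥0, 0 < ε → T ≤ (μ Set.univ ^ (1 / p - 1)) ^ 2 * (μ Set.univ * psi μ K ε F G) := by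
    intro ε hε
    have hfin : psi μ K ε F G ≠ ∞ := by
      unfold psi
      have h1 := en_ne_top (μ := μ) hm hKC hF.2.1 hG.1 hG.2.1
      have h2 : ∫⁻ x, (F x : ℝ≥0∞) ∂μ ≠ ∞ := ne_top_of_le_ne_top (by finiteness) (int_le hF.2.1)
      finiteness
    set s : Set ℝ≥0∞ := {t | ∃ F ∈ cls μ p C, ∃ G ∈ cls μ p C, psi μ K ε F G = t} with hs
    have hmem : psi μ K ε F G ∈ s := ⟨F, hF, G, hG, rfl⟩
    obtain ⟨u, -, hu, hus⟩ := exists_seq_tendsto_sInf ⟨_, hmem⟩ (OrderBot.bddBelow s)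
    choose Fk hFk Gk hGk hk using hus
    have hmle : sInf s ≤ psi μ K ε F G := sInf_le hmem
    have hmtop : sInf s ≠ ∞ := ne_top_of_le_ne_top hfin hmle
    have hmin : ∀ F ∈ cls μ p C, ∀ G ∈ cls μ p C, sInf s ≤ psi μ K ε F G :=
      fun F hF G hG => sInf_le ⟨F, hF, G, hG, rfl⟩
    have hlim : Tendsto (fun k => psi μ K ε (Fk k) (Gk k)) atTop (𝓝 (sInf s)) := by
      simpa only [hk] using hu
    have hB : ∀ k x, pot μ K (Fk k) x ≤ (C' * C : ℝ≥0) * μ Set.univ := fun k x => pot_le hKC (hFk k).2.1 x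
    have d1 : Tendsto (fun k => ∫⁻ x, (pot μ K (Fk k) o - pot μ K (Fk k) x) ∂μ) atTop (𝓝 (∫⁻ _, 0 ∂μ)) := by
      refine tendsto_lintegral_of_dominated_convergence (fun _ => (C' * C : ℝ≥0) * μ Set.univ) ?_ ?_ ?_ ?_
      · exact fun k => measurable_const.sub (ms_pot hm (hFk k).1)
      · exact fun k => Eventually.of_forall fun x => tsub_le_self.trans (hB k o)
      · rw [lintegral_const]; finiteness
      · filter_upwards [hA] with x hx
        exact step2 hb hb0 hl hp hm hK hKC hε hFk hGk hmtop hmin hlim hx.1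
    have d2 : Tendsto (fun k => ∫⁻ x, (pot μ K (Fk k) x - pot μ K (Fk k) o) ∂μ) atTop (𝓝 (∫⁻ _, 0 ∂μ)) := by
      refine tendsto_lintegral_of_dominated_convergence (fun _ => (C' * C : ℝ≥0) * μ Set.univ) ?_ ?_ ?_ ?_
      · exact fun k => (ms_pot hm (hFk k).1).sub measurable_const
      · exact fun k => Eventually.of_forall fun x => tsub_le_self.trans (hB k x)
      · rw [lintegral_const]; finiteness
      · filter_upwards [hA] with x hx
        exact step2 hb hb0 hl hp hm hK hKC hε hFk hGk hmtop hmin hlim hx.2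
    rw [lintegral_zero] at d1 d2
    have hμ : μ Set.univ ≠ ∞ := measure_ne_top _ _
    have hc : (μ Set.univ ^ (1 / p - 1)) ≠ ∞ := by
      refine ENNReal.rpow_ne_top_of_nonneg ?_ hμ
      rw [sub_nonneg, one_div]; exact ((one_lt_inv₀ hp0).2 hp1).le
    have lim2 : Tendsto (fun k => (μ Set.univ ^ (1 / p - 1)) ^ 2 *
        (μ Set.univ * (psi μ K ε (Fk k) (Gk k) + C * ∫⁻ x, (pot μ K (Fk k) o - pot μ K (Fk k) x) ∂μ) +
      (∫⁻ x, (pot μ K (Fk k) x - pot μ K (Fk k) o) ∂μ) * (C * μ Set.univ))) atTop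
      (𝓝 ((μ Set.univ ^ (1 / p - 1)) ^ 2 * (μ Set.univ * (sInf s + C * 0) + 0 * (C * μ Set.univ)))) := by
      refine ENNReal.Tendsto.const_mul (Tendsto.add ?_ ?_) (Or.inr (by finiteness))
      · refine ENNReal.Tendsto.const_mul (hlim.add ?_) (Or.inr (by finiteness))
        exact ENNReal.Tendsto.const_mul d1 (Or.inr (by finiteness))
      · exact ENNReal.Tendsto.mul_const d2 (Or.inr (by finiteness))
    rw [mul_zero, zero_mul, add_zero, add_zero] at lim2
    refine (ge_of_tendsto' lim2 ?_).trans (mul_le_mul_right (mul_le_mul_right hmle _) _)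
    intro k
    have s3 := step3 hm hK (hFk k) (hGk k) o hT
    have i1 := holder hp0 hp1 (hFk k).1 (hFk k).2.2
    have i2 := holder hp0 hp1 (hGk k).1 (hGk k).2.2
    calc T = T * (1 * 1) := by simp
      _ ≤ T * (((∫⁻ x, (Fk k x : ℝ≥0∞) ∂μ) * μ Set.univ ^ (1 / p - 1)) *
          ((∫⁻ x, (Gk k x : ℝ≥0∞) ∂μ) * μ Set.univ ^ (1 / p - 1))) := by gcongr
      _ = (μ Set.univ ^ (1 / p - 1)) ^ 2 * (T * ((∫⁻ x, (Fk k x : ℝ≥0∞) ∂μ) * ∫⁻ x, (Gk k x : ℝ≥0∞) ∂μ)) := by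
          ring
      _ ≤ _ := by
          refine mul_le_mul_right (s3.trans ?_) _
          refine add_le_add (mul_le_mul_right (add_le_add ?_ le_rfl) _) le_rfl
          exact le_self_add
  have hμ : μ Set.univ ≠ ∞ := measure_ne_top _ _
  have hc : (μ Set.univ ^ (1 / p - 1)) ≠ ∞ := by
    refine ENNReal.rpow_ne_top_of_nonneg ?_ hμ
    rw [sub_nonneg, one_div]; exact ((one_lt_inv₀ hp0).2 hp1).le
  have h2 : ∫⁻ x, (F x : ℝ≥0∞) ∂μ ≠ ∞ := ne_top_of_le_ne_top (by finiteness) (int_le hF.2.1)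
  have lim : Tendsto (fun j : ℕ => (μ Set.univ ^ (1 / p - 1)) ^ 2 *
      (μ Set.univ * psi μ K ((j : ℝ≥0) + 1)⁻¹ F G)) atTop
      (𝓝 ((μ Set.univ ^ (1 / p - 1)) ^ 2 * (μ Set.univ * (en μ K F G + 0 * ∫⁻ x, (F x : ℝ≥0∞) ∂μ)))) := by
    refine ENNReal.Tendsto.const_mul ?_ (Or.inr (by finiteness))
    refine ENNReal.Tendsto.const_mul ?_ (Or.inr (by finiteness))
    refine tendsto_const_nhds.add (ENNReal.Tendsto.mul_const ?_ (Or.inr h2))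
    rw [← ENNReal.coe_zero, ENNReal.tendsto_coe]
    have := tendsto_one_div_add_atTop_nhds_zero_nat (𝕜 := ℝ)
    rw [← NNReal.tendsto_coe]
    simpa using this
  have := ge_of_tendsto' lim fun j => key _ (by positivity)
  rw [zero_mul, add_zero, ← mul_assoc] at this
  refine this.trans (mul_le_mul_left (le_of_eq ?_) _)
  rcases eq_or_ne (μ Set.univ) 0 with h0 | h0
  · have e1 : 0 < 2 / p - 1 := by
      rw [sub_pos, lt_div_iff₀ hp0]; linarith
    rw [h0, mul_zero, ENNReal.zero_rpow_of_pos e1]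
  · rw [← ENNReal.rpow_natCast, ← ENNReal.rpow_mul]
    nth_rewrite 2 [← ENNReal.rpow_one (μ Set.univ)]
    rw [← ENNReal.rpow_add _ _ h0 hμ]
    congr 1
    push_cast; field_simp; ring

end
end RHLS

namespace RHLS
open MeasureTheory ENNReal Filter Topology
open scoped NNReal
open EuclideanGeometry (inversion)
section
variable {n : ℕ}

/-- Euclidean space -/
abbrev E (n : ℕ) := EuclideanSpace ℝ (Fin n)

/-- conformal factor of stereographic projection -/
noncomputable def w (x : E n) : ℝ≥0 := 2 / (1 + ‖x‖₊ ^ 2)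

/-- the measure of the sphere -/
noncomputable def mu (n : ℕ) : Measure (E n) :=
  volume.withDensity (fun x => ((w x ^ (n : ℝ) : ℝ≥0) : ℝ≥0∞))

/-- the kernel on the sphere -/
noncomputable def Ker (l : ℝ) (x y : E n) : ℝ≥0 := (w x * w y * nndist x y ^ 2) ^ l

/-- conformal factor of an inversion -/
noncomputable def kap (a : E n) (r : ℝ≥0) (x : E n) : ℝ≥0 :=
  (r / nndist x a) ^ 2 * w (inversion a r x) / w x

lemma w_pos (x : E n) : 0 < w x := by unfold w; positivity

lemma coe_w (x : E n) : (w x : ℝ) = 2 / (1 + ‖x‖ ^ 2) := by unfold w; push_cast; rfl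

lemma ms_w : Measurable (w : E n → ℝ≥0) := by unfold w; fun_prop

lemma ms_inv (a : E n) (r : ℝ) : Measurable (inversion a r) := by
  unfold inversion
  simp only [vsub_eq_sub, vadd_eq_add]
  fun_prop

lemma ms_kap (a : E n) (r : ℝ≥0) : Measurable (kap a r) := by
  unfold kap
  have h1 : Measurable (fun x => w (inversion a r x)) := ms_w.comp (ms_inv a r)
  have h2 : Measurable (fun x : E n => nndist x a) := by fun_prop
  exact (((measurable_const.div h2).pow_const 2).mul h1).div ms_w

lemma ms_Ker (l : ℝ) : Measurable (Function.uncurry (Ker l : E n → E n → ℝ≥0)) := by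
  have : Function.uncurry (Ker l : E n → E n → ℝ≥0) =
    fun z => (w z.1 * w z.2 * nndist z.1 z.2 ^ 2) ^ l := rfl
  rw [this]
  have h1 : Measurable (fun z : E n × E n => w z.1) := ms_w.comp measurable_fst
  have h2 : Measurable (fun z : E n × E n => w z.2) := ms_w.comp measurable_snd
  exact ((h1.mul h2).mul (by fun_prop)).pow_const l

lemma Ker_symm (l : ℝ) (x y : E n) : Ker l x y = Ker l y x := by
  unfold Ker; rw [nndist_comm, mul_comm (w x)]

lemma Ker_le {l : ℝ} (hl : 0 ≤ l) (x y : E n) : Ker l x y ≤ 4 ^ l := by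
  unfold Ker
  refine NNReal.rpow_le_rpow ?_ hl
  rw [← NNReal.coe_le_coe]
  push_cast
  rw [coe_w, coe_w, dist_eq_norm]
  have h1 : ‖x - y‖ ≤ ‖x‖ + ‖y‖ := norm_sub_le x y
  have h2 : ‖x - y‖ ^ 2 ≤ (1 + ‖x‖ ^ 2) * (1 + ‖y‖ ^ 2) := by
    have : ‖x - y‖ ^ 2 ≤ (‖x‖ + ‖y‖) ^ 2 := by gcongr
    nlinarith [sq_nonneg (1 - ‖x‖ * ‖y‖)]
  have hx : 0 < 1 + ‖x‖ ^ 2 := by positivity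
  have hy : 0 < 1 + ‖y‖ ^ 2 := by positivity
  rw [div_mul_div_comm, div_mul_eq_mul_div, div_le_iff₀ (by positivity)]
  linarith

instance : IsFiniteMeasure (mu n) := by
  refine ⟨?_⟩
  unfold mu
  rw [withDensity_apply _ MeasurableSet.univ, Measure.restrict_univ]
  rcases Nat.eq_zero_or_pos n with rfl | hn
  · simp
  have h := integrable_rpow_neg_one_add_norm_sq (E := E n) (μ := volume) (r := 2 * n) (by simp; norm_cast; omega)
  have h2 := (h.const_mul ((2 : ℝ) ^ (n : ℝ))).lintegral_lt_top
  refine lt_of_le_of_lt (lintegral_mono fun x => ?_) h2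
  rw [← ENNReal.ofReal_coe_nnreal]
  refine ENNReal.ofReal_le_ofReal (le_of_eq ?_)
  rw [NNReal.coe_rpow, coe_w, Real.div_rpow (by norm_num) (by positivity), div_eq_mul_inv,
    ← Real.rpow_neg (by positivity)]
  congr 2; ring

lemma det_inv (a : E n) (r : ℝ) (x : E n) :
    |((r / dist x a) ^ 2 • ((ℝ ∙ (x - a))ᗮ.reflection : E n →L[ℝ] E n)).det| = ((r / dist x a) ^ 2) ^ n := by
  have : ((r / dist x a) ^ 2 • ((ℝ ∙ (x - a))ᗮ.reflection : E n →L[ℝ] E n)).det =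
     ((r / dist x a) ^ 2) ^ n * LinearMap.det ((ℝ ∙ (x - a))ᗮ.reflection.toLinearMap) := by
    rw [ContinuousLinearMap.det, ContinuousLinearMap.toLinearMap_smul, LinearMap.det_smul, finrank_euclideanSpace_fin]
    rfl
  rw [this, Submodule.det_reflection, abs_mul, abs_pow, abs_pow]
  simp

lemma cov_inv (hn : 1 ≤ n) (a : E n) {r : ℝ≥0} (hr : 0 < r) (φ : E n → ℝ≥0∞) (hφ : Measurable φ) :
    ∫⁻ x, φ x ∂(mu n) = ∫⁻ x, φ (inversion a r x) * ((kap a r x ^ (n : ℝ) : ℝ≥0) : ℝ≥0∞) ∂(mu n) := by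
  have : Nonempty (Fin n) := ⟨⟨0, hn⟩⟩
  have hr' : (r : ℝ) ≠ 0 := by exact_mod_cast hr.ne'
  have hwm : Measurable (fun x : E n => ((w x ^ (n : ℝ) : ℝ≥0) : ℝ≥0∞)) :=
    (ms_w.pow_const _).coe_nnreal_ennreal
  have hk : Measurable (fun x : E n => φ (inversion a r x) * ((kap a r x ^ (n : ℝ) : ℝ≥0) : ℝ≥0∞)) :=
    (hφ.comp (ms_inv a r)).mul ((ms_kap a r).pow_const _).coe_nnreal_ennreal
  unfold mu
  rw [lintegral_withDensity_eq_lintegral_mul _ hwm hφ, lintegral_withDensity_eq_lintegral_mul _ hwm hk]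
  have hae : ({a}ᶜ : Set (E n)) =ᵐ[volume] Set.univ := by
    rw [ae_eq_univ, compl_compl]; exact measure_singleton a
  have himg : inversion a (r : ℝ) '' ({a}ᶜ : Set (E n)) = {a}ᶜ := by
    ext y
    simp only [Set.mem_image, Set.mem_compl_iff, Set.mem_singleton_iff]
    constructor
    · rintro ⟨x, hx, rfl⟩
      rwa [EuclideanGeometry.inversion_eq_center hr']
    · intro hy
      exact ⟨inversion a r y, by rwa [EuclideanGeometry.inversion_eq_center hr'],
        EuclideanGeometry.inversion_inversion a hr' y⟩
  have hcov := lintegral_image_eq_lintegral_abs_det_fderiv_mul (volume : Measure (E n))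
    (s := ({a}ᶜ : Set (E n))) (MeasurableSet.singleton a).compl (f := inversion a (r : ℝ))
    (fun x hx => (EuclideanGeometry.hasFDerivAt_inversion hx).hasFDerivWithinAt)
    (EuclideanGeometry.inversion_injective a hr').injOn
    (fun x => ((w x ^ (n : ℝ) : ℝ≥0) : ℝ≥0∞) * φ x)
  rw [himg, setLIntegral_congr hae, setLIntegral_congr hae, Measure.restrict_univ] at hcov
  refine hcov.trans (lintegral_congr fun x => ?_)
  rw [det_inv]
  have e1 : ENNReal.ofReal (((r : ℝ) / dist x a) ^ 2) ^ n = ((((r / nndist x a) ^ 2) ^ (n : ℝ) : ℝ≥0) : ℝ≥0∞) := by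
    rw [NNReal.rpow_natCast, ENNReal.coe_pow]
    congr 1
    rw [← ENNReal.ofReal_coe_nnreal]
    push_cast
    rfl
  rw [ENNReal.ofReal_pow (by positivity), e1]
  simp only [Pi.mul_apply]
  rw [← mul_assoc, ← ENNReal.coe_mul, ← NNReal.mul_rpow, mul_comm (φ _), ← mul_assoc, ← ENNReal.coe_mul,
    ← NNReal.mul_rpow]
  have : (r / nndist x a) ^ 2 * w (inversion a r x) = w x * kap a r x := by
    unfold kap
    rw [mul_div_cancel₀ _ (w_pos x).ne']
  rw [this]

end
end RHLS

namespace RHLS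
open MeasureTheory ENNReal Filter Topology
open scoped NNReal
open EuclideanGeometry (inversion)
section
variable {n : ℕ}

lemma inv_eq (a : E n) (r : ℝ) (x : E n) : inversion a r x = (r / dist x a) ^ 2 • (x - a) + a := by
  unfold inversion; simp only [vsub_eq_sub, vadd_eq_add]

lemma norm_inv (a : E n) (r : ℝ) {x : E n} (hx : x ≠ a) :
    1 + ‖inversion a r x‖ ^ 2 = (r / dist x a) ^ 2 * (1 + ‖x‖ ^ 2) +
      (1 + ‖a‖ ^ 2 - r ^ 2) * (1 - (r / dist x a) ^ 2) := by
  have hD : dist x a ≠ 0 := dist_ne_zero.2 hx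
  have h1 : ‖x‖ ^ 2 = ‖x - a‖ ^ 2 + 2 * inner ℝ (x - a) a + ‖a‖ ^ 2 := by
    rw [← norm_add_sq_real, sub_add_cancel]
  have h3 : (r / dist x a) ^ 2 * ‖x - a‖ ^ 2 = r ^ 2 := by
    rw [← dist_eq_norm]; field_simp
  rw [inv_eq, norm_add_sq_real, norm_smul, inner_smul_left, mul_pow, h1]
  simp only [Real.norm_eq_abs, sq_abs, conj_trivial]
  linear_combination ((r / dist x a) ^ 2 - 1) * h3

lemma coe_kap (a : E n) (r : ℝ≥0) (x : E n) :
    (kap a r x : ℝ) = ((r : ℝ) / dist x a) ^ 2 * (1 + ‖x‖ ^ 2) / (1 + ‖inversion a r x‖ ^ 2) := by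
  unfold kap
  push_cast
  rw [coe_w, coe_w]
  have h1 : (0 : ℝ) < 1 + ‖x‖ ^ 2 := by positivity
  have h2 : (0 : ℝ) < 1 + ‖inversion a r x‖ ^ 2 := by positivity
  field_simp

lemma kap_sub (a : E n) (r : ℝ≥0) {x : E n} (hx : x ≠ a) :
    ∃ c > 0, 1 - (kap a r x : ℝ) = c * ((1 + ‖a‖ ^ 2 - r ^ 2) * (dist x a ^ 2 - r ^ 2)) := by
  have hD : 0 < dist x a := dist_pos.2 hx
  have h2 : (0 : ℝ) < 1 + ‖inversion a r x‖ ^ 2 := by positivity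
  refine ⟨1 / (dist x a ^ 2 * (1 + ‖inversion a r x‖ ^ 2)), by positivity, ?_⟩
  have h := norm_inv a r hx
  rw [coe_kap]
  rw [one_sub_div h2.ne', eq_comm, eq_div_iff h2.ne']
  have : (r / dist x a) ^ 2 * dist x a ^ 2 = (r : ℝ) ^ 2 := by field_simp
  have e : (1 + ‖inversion a r x‖ ^ 2) - ((r : ℝ) / dist x a) ^ 2 * (1 + ‖x‖ ^ 2) =
    (1 + ‖a‖ ^ 2 - r ^ 2) * (1 - (r / dist x a) ^ 2) := by linarith
  rw [e]
  field_simp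

lemma kap_lt (a : E n) (r : ℝ≥0) {x : E n} (hx : x ≠ a) :
    kap a r x < 1 ↔ 0 < (1 + ‖a‖ ^ 2 - (r : ℝ) ^ 2) * (dist x a ^ 2 - r ^ 2) := by
  obtain ⟨c, hc, h⟩ := kap_sub a r hx
  rw [← NNReal.coe_lt_coe, NNReal.coe_one, ← sub_pos, h, mul_pos_iff_of_pos_left hc]

lemma kap_gt (a : E n) (r : ℝ≥0) {x : E n} (hx : x ≠ a) :
    1 < kap a r x ↔ (1 + ‖a‖ ^ 2 - (r : ℝ) ^ 2) * (dist x a ^ 2 - r ^ 2) < 0 := by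
  obtain ⟨c, hc, h⟩ := kap_sub a r hx
  rw [← NNReal.coe_lt_coe, NNReal.coe_one, ← sub_neg, h]
  constructor
  · intro h; by_contra h'; exact absurd (mul_nonneg hc.le (not_lt.1 h')) (not_le.2 h)
  · exact fun h => mul_neg_of_pos_of_neg hc h

lemma kap_eq (a : E n) (r : ℝ≥0) {x : E n} (hx : x ≠ a) :
    kap a r x = 1 ↔ (1 + ‖a‖ ^ 2 - (r : ℝ) ^ 2) * (dist x a ^ 2 - r ^ 2) = 0 := by
  obtain ⟨c, hc, h⟩ := kap_sub a r hx
  rw [← NNReal.coe_inj, NNReal.coe_one]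
  constructor
  · intro h'; rw [h', sub_self] at h
    exact (mul_eq_zero.1 h.symm).resolve_left hc.ne'
  · intro h'; rw [h', mul_zero] at h; linarith

lemma kap_pos (a : E n) {r : ℝ≥0} (hr : 0 < r) {x : E n} (hx : x ≠ a) : 0 < kap a r x := by
  have : 0 < nndist x a := by rw [← NNReal.coe_pos, coe_nndist]; exact dist_pos.2 hx
  have := w_pos x
  have := w_pos (inversion a r x)
  unfold kap
  positivity

lemma kap_inv (a : E n) {r : ℝ≥0} (hr : 0 < r) {x : E n} (hx : x ≠ a) :
    kap a r (inversion a r x) = (kap a r x)⁻¹ := by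
  have hr' : (r : ℝ) ≠ 0 := by exact_mod_cast hr.ne'
  have hD : dist x a ≠ 0 := dist_ne_zero.2 hx
  rw [← NNReal.coe_inj, NNReal.coe_inv, coe_kap, coe_kap, EuclideanGeometry.inversion_inversion a hr',
    EuclideanGeometry.dist_inversion_center]
  have h1 : (0 : ℝ) < 1 + ‖x‖ ^ 2 := by positivity
  have h2 : (0 : ℝ) < 1 + ‖inversion a r x‖ ^ 2 := by positivity
  field_simp

lemma Ker_conf (a : E n) {r : ℝ≥0} (l : ℝ) {x y : E n} (hx : x ≠ a) (hy : y ≠ a) :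
    Ker l (inversion a r x) (inversion a r y) = kap a r x ^ l * kap a r y ^ l * Ker l x y := by
  unfold Ker
  rw [← NNReal.mul_rpow, ← NNReal.mul_rpow]
  congr 1
  have hwx := (w_pos x).ne'
  have hwy := (w_pos y).ne'
  have hd : nndist (inversion a r x) (inversion a r y) = r ^ 2 / (nndist x a * nndist y a) * nndist x y := by
    rw [← NNReal.coe_inj]; push_cast
    exact EuclideanGeometry.dist_inversion_inversion hx hy r
  rw [hd]
  unfold kap
  have h1 : nndist x a ≠ 0 := by rwa [ne_eq, nndist_eq_zero]
  have h2 : nndist y a ≠ 0 := by rwa [ne_eq, nndist_eq_zero]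
  field_simp

lemma dist_inv_sq (a : E n) {r : ℝ} (hr : r ≠ 0) {x y : E n} (hy : y ≠ a) :
    dist x (inversion a r y) ^ 2 = (r / dist y a) ^ 2 *
      (dist x y ^ 2 + (dist x a ^ 2 - r ^ 2) * (dist y a ^ 2 - r ^ 2) / r ^ 2) := by
  have hD : dist y a ≠ 0 := dist_ne_zero.2 hy
  have e1 : x - inversion a r y = (x - a) - (r / dist y a) ^ 2 • (y - a) := by
    rw [inv_eq]; abel
  have e2 : x - y = (x - a) - (y - a) := by abel
  have f1 : dist x (inversion a r y) ^ 2 = dist x a ^ 2 -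
      2 * ((r / dist y a) ^ 2 * inner ℝ (x - a) (y - a)) + ((r / dist y a) ^ 2) ^ 2 * dist y a ^ 2 := by
    rw [dist_eq_norm x (inversion a r y), e1, norm_sub_sq_real (x - a), norm_smul,
      inner_smul_right, mul_pow, ← dist_eq_norm, ← dist_eq_norm]
    simp only [Real.norm_eq_abs, sq_abs]
  have f2 : dist x y ^ 2 = dist x a ^ 2 - 2 * inner ℝ (x - a) (y - a) + dist y a ^ 2 := by
    rw [dist_eq_norm x y, e2, norm_sub_sq_real (x - a), ← dist_eq_norm, ← dist_eq_norm]
  rw [f1, f2]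
  field_simp
  ring

lemma Ker_inv (a : E n) {r : ℝ≥0} (hr : 0 < r) (l : ℝ) (x : E n) {y : E n} (hy : y ≠ a) :
    Ker l x (inversion a r y) * kap a r y ^ (-l) =
      (w x * w y * (nndist x (inversion a r y) ^ 2 / (r / nndist y a) ^ 2)) ^ l := by
  unfold Ker
  rw [NNReal.rpow_neg, ← NNReal.inv_rpow, ← NNReal.mul_rpow]
  congr 1
  unfold kap
  have hwy := (w_pos y).ne'
  have hwi := (w_pos (inversion a r y)).ne'
  have h2 : nndist y a ≠ 0 := by rwa [ne_eq, nndist_eq_zero]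
  have h3 := hr.ne'
  field_simp

lemma Ker_sign (a : E n) {r : ℝ≥0} (hr : 0 < r) {l : ℝ} (hl : 0 ≤ l) {x y : E n} (hy : y ≠ a)
    (h : 0 ≤ (dist x a ^ 2 - r ^ 2) * (dist y a ^ 2 - (r : ℝ) ^ 2)) :
    Ker l x y ≤ Ker l x (inversion a r y) * kap a r y ^ (-l) := by
  rw [Ker_inv a hr l x hy]
  unfold Ker
  refine NNReal.rpow_le_rpow ?_ hl
  gcongr
  rw [← NNReal.coe_le_coe]
  push_cast
  have hr' : (r : ℝ) ≠ 0 := by exact_mod_cast hr.ne'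
  have hD : dist y a ≠ 0 := dist_ne_zero.2 hy
  have hc : ((r : ℝ) / dist y a) ^ 2 ≠ 0 := by positivity
  rw [dist_inv_sq a hr' hy, mul_div_cancel_left₀ _ hc]
  have : 0 ≤ (dist x a ^ 2 - r ^ 2) * (dist y a ^ 2 - (r : ℝ) ^ 2) / r ^ 2 := by positivity
  linarith

/-- the good set -/
def Sg (a : E n) (r : ℝ≥0) : Set (E n) := {x | x ≠ a ∧ dist x a ≠ r}

lemma ae_Sg (hn : 1 ≤ n) (a : E n) (r : ℝ≥0) : ∀ᵐ x ∂(mu n), x ∈ Sg a r := by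
  have : Nonempty (Fin n) := ⟨⟨0, hn⟩⟩
  unfold mu
  refine (withDensity_absolutelyContinuous _ _).ae_le ?_
  have h1 : ∀ᵐ x : E n, x ≠ a := by
    rw [ae_iff]; simp
  have h2 : ∀ᵐ x : E n, x ∉ Metric.sphere a r := by
    rw [ae_iff]; simp only [not_not]
    exact Measure.addHaar_sphere volume a r
  filter_upwards [h1, h2] with x hx1 hx2
  exact ⟨hx1, fun h => hx2 h⟩

lemma confInv (hn : 1 ≤ n) (a : E n) {r : ℝ≥0} (hr : 0 < r) {l : ℝ} (hl : 0 ≤ l)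
    (hne : 1 + ‖a‖ ^ 2 - (r : ℝ) ^ 2 ≠ 0) :
    ConfInv (mu n) (Ker l) n l (inversion a r) (kap a r) (Sg a r) where
  msσ := ms_inv a r
  msκ := ms_kap a r
  cov := cov_inv hn a hr
  ae := ae_Sg hn a r
  maps := by
    intro x hx
    have hr' : (r : ℝ) ≠ 0 := by exact_mod_cast hr.ne'
    have hD : dist x a ≠ 0 := dist_ne_zero.2 hx.1
    refine ⟨by rw [ne_eq, EuclideanGeometry.inversion_eq_center hr']; exact hx.1, ?_⟩
    rw [EuclideanGeometry.dist_inversion_center]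
    intro h
    rw [div_eq_iff hD, sq] at h
    exact hx.2 (mul_left_cancel₀ hr' h).symm
  inv := fun x _ => EuclideanGeometry.inversion_inversion a (by exact_mod_cast hr.ne') x
  pos := fun x hx => kap_pos a hr hx.1
  kinv := fun x hx => kap_inv a hr hx.1
  kne := by
    intro x hx
    rw [ne_eq, kap_eq a r hx.1, mul_eq_zero, not_or]
    refine ⟨hne, fun h => hx.2 ?_⟩
    rw [sub_eq_zero] at h
    exact (pow_left_inj₀ dist_nonneg r.2 two_ne_zero).1 h
  Kconf := fun x hx y hy => Ker_conf a l hx.1 hy.1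
  Ksign := by
    intro x hx y hy h
    refine Ker_sign a hr hl hy.1 ?_
    rw [kap_lt a r hx.1, kap_lt a r hy.1] at h
    by_contra hneg
    rw [not_le] at hneg
    set s := (1 + ‖a‖ ^ 2 - (r : ℝ) ^ 2)
    set X := dist x a ^ 2 - (r : ℝ) ^ 2
    set Y := dist y a ^ 2 - (r : ℝ) ^ 2
    rcases mul_neg_iff.1 hneg with ⟨h1, h2⟩ | ⟨h1, h2⟩ <;> rcases lt_or_gt_of_ne hne with h3 | h3
    · exact absurd (h.2 (mul_pos_of_neg_of_neg h3 h2)) (not_lt.2 (mul_neg_of_neg_of_pos h3 h1).le)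
    · exact absurd (h.1 (mul_pos h3 h1)) (not_lt.2 (mul_neg_of_pos_of_neg h3 h2).le)
    · exact absurd (h.1 (mul_pos_of_neg_of_neg h3 h1)) (not_lt.2 (mul_neg_of_neg_of_pos h3 h2).le)
    · exact absurd (h.2 (mul_pos h3 h2)) (not_lt.2 (mul_neg_of_pos_of_neg h3 h1).le)

end
end RHLS

namespace RHLS
open MeasureTheory ENNReal Filter Topology
open scoped NNReal
open EuclideanGeometry (inversion)
section
variable {n : ℕ}

lemma kap_iso (a : E n) {r : ℝ≥0} (hi : 1 + ‖a‖ ^ 2 - (r : ℝ) ^ 2 = 0) {x : E n} (hx : x ≠ a) :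
    kap a r x = 1 := by
  rw [kap_eq a r hx, hi, zero_mul]

lemma Ker_swap (a : E n) {r : ℝ≥0} (hr : 0 < r) (hi : 1 + ‖a‖ ^ 2 - (r : ℝ) ^ 2 = 0) (l : ℝ)
    {x y : E n} (hx : x ≠ a) (hy : y ≠ a) :
    Ker l x (inversion a r y) = Ker l (inversion a r x) y := by
  have hr' : (r : ℝ) ≠ 0 := by exact_mod_cast hr.ne'
  have hy' : inversion a r y ≠ a := by rwa [ne_eq, EuclideanGeometry.inversion_eq_center hr']
  have := Ker_conf a (r := r) l hx hy'
  rw [EuclideanGeometry.inversion_inversion a hr', kap_iso a hi hx, kap_iso a hi hy'] at this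
  simpa using this.symm

lemma pot_iso (hn : 1 ≤ n) (a : E n) {r : ℝ≥0} (hr : 0 < r) (hi : 1 + ‖a‖ ^ 2 - (r : ℝ) ^ 2 = 0) (l : ℝ)
    {x : E n} (hx : x ≠ a) :
    pot (mu n) (Ker l) (fun _ => 1) (inversion a r x) = pot (mu n) (Ker l) (fun _ => 1) x := by
  unfold pot
  simp only [mul_one]
  rw [cov_inv hn a hr _ ((ms_Kl (ms_Ker l) _).coe_nnreal_ennreal)]
  refine lintegral_congr_ae ?_
  filter_upwards [ae_Sg hn a r] with y hy
  rw [Ker_conf a l hx hy.1, kap_iso a hi hx, kap_iso a hi hy.1]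
  simp

lemma exists_iso {x : E n} (hx : x ≠ 0) : ∃ a : E n, ∃ r : ℝ≥0, 0 < r ∧ 1 + ‖a‖ ^ 2 - (r : ℝ) ^ 2 = 0 ∧
    (0 : E n) ≠ a ∧ x ≠ a ∧ inversion a r 0 = x := by
  have hx0 : ‖x‖ ≠ 0 := norm_ne_zero_iff.2 hx
  set a : E n := -((‖x‖ ^ 2)⁻¹ • x) with ha
  have hna : ‖a‖ ^ 2 = (‖x‖ ^ 2)⁻¹ := by
    rw [ha, norm_neg, norm_smul, mul_pow]
    simp only [Real.norm_eq_abs, sq_abs]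
    field_simp
  have ha0 : (0 : E n) ≠ a := by
    intro h
    rw [← h] at hna
    simp at hna
    exact hx (by simpa using hna.symm)
  set r : ℝ≥0 := NNReal.sqrt (1 + ‖a‖₊ ^ 2) with hr
  have hr2 : (r : ℝ) ^ 2 = 1 + ‖a‖ ^ 2 := by
    have : r ^ 2 = 1 + ‖a‖₊ ^ 2 := by rw [hr, NNReal.sq_sqrt]
    have := congrArg (fun t : ℝ≥0 => (t : ℝ)) this
    simpa using this
  have hr0 : 0 < r := by rw [hr, NNReal.sqrt_pos]; positivity
  have hr' : (r : ℝ) ≠ 0 := by exact_mod_cast hr0.ne'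
  have him : inversion a r 0 = x := by
    rw [inv_eq, dist_zero_left, div_pow, hr2, hna, zero_sub, ha, neg_neg, smul_smul, ← neg_smul, ← add_smul]
    have : (1 + (‖x‖ ^ 2)⁻¹) / (‖x‖ ^ 2)⁻¹ * (‖x‖ ^ 2)⁻¹ + -(‖x‖ ^ 2)⁻¹ = 1 := by
      field_simp; ring
    rw [this, one_smul]
  refine ⟨a, r, hr0, by rw [hr2, sub_self], ha0, ?_, him⟩
  rw [← him, ne_eq, EuclideanGeometry.inversion_eq_center hr']
  exact ha0

lemma pot_const (hn : 1 ≤ n) (l : ℝ) (x : E n) :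
    pot (mu n) (Ker l) (fun _ => 1) x = pot (mu n) (Ker l) (fun _ => 1) 0 := by
  rcases eq_or_ne x 0 with rfl | hx
  · rfl
  obtain ⟨a, r, hr, hi, h0, -, h⟩ := exists_iso hx
  rw [← h, pot_iso hn a hr hi l h0]

lemma tendsto_H (a : E n) {r : ℝ≥0} (hr : 0 < r) (hi : 1 + ‖a‖ ^ 2 - (r : ℝ) ^ 2 = 0) {l : ℝ} (hl : 0 < l)
    {x y : E n} (hx : x ≠ a) (hy : y ≠ a) {u : ℕ → ℝ≥0} (hu : Tendsto u atTop (𝓝 r)) :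
    Tendsto (fun j => Ker l x (inversion a (u j) y) * kap a (u j) y ^ (-l)) atTop
      (𝓝 (Ker l (inversion a r x) y)) := by
  have hu' : Tendsto (fun j => (u j : ℝ)) atTop (𝓝 (r : ℝ)) := NNReal.tendsto_coe.2 hu
  have hinv : Tendsto (fun j => inversion a (u j : ℝ) y) atTop (𝓝 (inversion a (r : ℝ) y)) :=
    Filter.Tendsto.inversion tendsto_const_nhds hu' tendsto_const_nhds hy
  have hwc : Continuous (w : E n → ℝ≥0) := by
    unfold w
    refine continuous_const.div (by fun_prop) fun x => by positivity
  have hwi := (hwc.tendsto _).comp hinv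
  have h2 : nndist y a ≠ 0 := by rwa [ne_eq, nndist_eq_zero]
  have h1 : Tendsto (fun j => Ker l x (inversion a (u j) y)) atTop (𝓝 (Ker l x (inversion a r y))) := by
    unfold Ker
    refine Tendsto.nnrpow ?_ tendsto_const_nhds (Or.inr hl)
    refine Tendsto.mul (tendsto_const_nhds.mul hwi) ((Tendsto.nndist tendsto_const_nhds hinv).pow 2)
  have h3 : Tendsto (fun j => kap a (u j) y) atTop (𝓝 (kap a r y)) := by
    unfold kap
    exact Tendsto.div_const (((hu.div_const _).pow 2).mul hwi) _
  have h4 : Tendsto (fun j => kap a (u j) y ^ (-l)) atTop (𝓝 (kap a r y ^ (-l))) :=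
    Tendsto.nnrpow h3 tendsto_const_nhds (Or.inl (kap_pos a hr hy).ne')
  have := h1.mul h4
  rwa [kap_iso a hi hy, NNReal.one_rpow, mul_one, Ker_swap a hr hi l hx hy] at this

lemma approx (hn : 1 ≤ n) (a : E n) {r : ℝ≥0} (hr : 0 < r) (hi : 1 + ‖a‖ ^ 2 - (r : ℝ) ^ 2 = 0) {l : ℝ}
    (hl : 0 < l) {x : E n} (hx : x ≠ a) : Approx (mu n) (Ker l) n l x (inversion a r x) := by
  intro η hη
  obtain ⟨u, -, hu, hulim⟩ := exists_seq_strictMono_tendsto' hr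
  obtain ⟨v, -, hv, hvlim⟩ := exists_seq_strictAnti_tendsto r
  have hu1 : ∀ j, 0 < 1 + ‖a‖ ^ 2 - (u j : ℝ) ^ 2 := by
    intro j
    have : (u j : ℝ) ^ 2 < (r : ℝ) ^ 2 :=
      pow_lt_pow_left₀ (NNReal.coe_lt_coe.2 (hu j).2) (u j).2 two_ne_zero
    linarith
  have hv1 : ∀ j, 1 + ‖a‖ ^ 2 - (v j : ℝ) ^ 2 < 0 := by
    intro j
    have : (r : ℝ) ^ 2 < (v j : ℝ) ^ 2 :=
      pow_lt_pow_left₀ (NNReal.coe_lt_coe.2 (hv j)) r.2 two_ne_zero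
    linarith
  have c1 := fun j => confInv hn a (hu j).1 hl.le (hu1 j).ne'
  have c2 := fun j => confInv hn a (hr.trans (hv j)) hl.le (hv1 j).ne
  set h : ℕ → E n → ℝ≥0 := fun j y =>
    {y | 1 < kap a (u j) y}.indicator (fun y => Ker l x (inversion a (u j) y) * kap a (u j) y ^ (-l)) y +
        {y | 1 < kap a (v j) y}.indicator (fun y => Ker l x (inversion a (v j) y) * kap a (v j) y ^ (-l)) y
    with hh
  set e : ℕ → E n → ℝ≥0∞ := fun j y => ((Ker l (inversion a r x) y : ℝ≥0∞) - (h j y : ℝ≥0∞)) +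
    ({y | kap a (u j) y < 1} ∩ {y | kap a (v j) y < 1}).indicator (fun _ => (1 : ℝ≥0∞)) y with he
  have mk : ∀ s : ℝ≥0, Measurable ({y | 1 < kap a s y}.indicator
      (fun y => Ker l x (inversion a s y) * kap a s y ^ (-l))) := fun s =>
    (((ms_Kl (ms_Ker l) x).comp (ms_inv a s)).mul ((ms_kap a s).pow_const _)).indicator
      (measurableSet_lt measurable_const (ms_kap a s))
  have hem : ∀ j, Measurable (e j) := by
    intro j
    refine Measurable.add (Measurable.sub (ms_Kl (ms_Ker l) _).coe_nnreal_ennreal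
      ((mk _).add (mk _)).coe_nnreal_ennreal) (measurable_const.indicator (MeasurableSet.inter ?_ ?_))
    · exact measurableSet_lt (ms_kap a _) measurable_const
    · exact measurableSet_lt (ms_kap a _) measurable_const
  have hlim : Tendsto (fun j => ∫⁻ y, e j y ∂(mu n)) atTop (𝓝 (∫⁻ _, 0 ∂(mu n))) := by
    refine tendsto_lintegral_of_dominated_convergence (fun _ => ((4 ^ l : ℝ≥0) : ℝ≥0∞) + 1) hem ?_ ?_ ?_
    · intro j
      filter_upwards with y
      refine add_le_add (tsub_le_self.trans (ENNReal.coe_le_coe.2 (Ker_le hl.le _ _))) ?_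
      exact Set.indicator_le_self' (fun _ _ => zero_le) y
    · rw [lintegral_const]; finiteness
    · filter_upwards [ae_Sg hn a r] with y hy
      have gen : ∀ s : ℕ → ℝ≥0, Tendsto s atTop (𝓝 r) →
          Tendsto (fun j => (Ker l (inversion a r x) y : ℝ≥0∞) -
            ((Ker l x (inversion a (s j) y) * kap a (s j) y ^ (-l) : ℝ≥0) : ℝ≥0∞)) atTop (𝓝 0) := by
        intro s hs
        have t := ENNReal.Tendsto.sub (tendsto_const_nhds (x := (Ker l (inversion a r x) y : ℝ≥0∞)))
          (ENNReal.tendsto_coe.2 (tendsto_H a hr hi hl hx hy.1 hs)) (Or.inl (by finiteness))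
        rwa [tsub_self] at t
      rcases lt_or_gt_of_ne hy.2 with hlt | hgt
      · refine tendsto_of_tendsto_of_tendsto_of_le_of_le' tendsto_const_nhds (gen u hulim)
          (Eventually.of_forall fun _ => zero_le) ?_
        have hu' : Tendsto (fun j => (u j : ℝ)) atTop (𝓝 (r : ℝ)) := NNReal.tendsto_coe.2 hulim
        filter_upwards [hu'.eventually (lt_mem_nhds hlt)] with j hj
        have hk : 1 < kap a (u j) y := by
          rw [kap_gt a _ hy.1]
          refine mul_neg_of_pos_of_neg (hu1 j) (sub_neg.2 ?_)
          exact pow_lt_pow_left₀ hj dist_nonneg two_ne_zero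
        have hz : ({y | kap a (u j) y < 1} ∩ {y | kap a (v j) y < 1}).indicator (fun _ => (1 : ℝ≥0∞)) y = 0 :=
          Set.indicator_of_notMem (fun h => absurd h.1 (not_lt.2 hk.le)) _
        simp only [he]
        rw [hz, add_zero]
        refine tsub_le_tsub_left (ENNReal.coe_le_coe.2 ?_) _
        simp only [hh]
        rw [Set.indicator_of_mem (by exact hk)]
        exact le_self_add
      · refine tendsto_of_tendsto_of_tendsto_of_le_of_le' tendsto_const_nhds (gen v hvlim)
          (Eventually.of_forall fun _ => zero_le) ?_
        have hv' : Tendsto (fun j => (v j : ℝ)) atTop (𝓝 (r : ℝ)) := NNReal.tendsto_coe.2 hvlim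
        filter_upwards [hv'.eventually (gt_mem_nhds hgt)] with j hj
        have hk : 1 < kap a (v j) y := by
          rw [kap_gt a _ hy.1]
          refine mul_neg_of_neg_of_pos (hv1 j) (sub_pos.2 ?_)
          exact pow_lt_pow_left₀ hj (v j).2 two_ne_zero
        have hz : ({y | kap a (u j) y < 1} ∩ {y | kap a (v j) y < 1}).indicator (fun _ => (1 : ℝ≥0∞)) y = 0 :=
          Set.indicator_of_notMem (fun h => absurd h.2 (not_lt.2 hk.le)) _
        simp only [he]
        rw [hz, add_zero]
        refine tsub_le_tsub_left (ENNReal.coe_le_coe.2 ?_) _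
        simp only [hh]
        rw [Set.indicator_of_mem (a := y) (s := {y | 1 < kap a (v j) y}) (by exact hk)]
        exact le_add_self
  rw [lintegral_zero, ENNReal.tendsto_nhds_zero] at hlim
  obtain ⟨j, hj⟩ := (hlim η hη).exists
  refine ⟨_, _, _, _, _, _, c1 j, c2 j, e j, hem j, hj, ?_, ?_⟩
  · filter_upwards with y
    calc (Ker l (inversion a r x) y : ℝ≥0∞) ≤ (h j y : ℝ≥0∞) + (Ker l (inversion a r x) y - (h j y : ℝ≥0∞)) :=
          le_add_tsub
      _ ≤ _ := add_le_add le_rfl le_self_add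
  · filter_upwards with y
    have : {y | kap a (u j) y < 1}.indicator (fun _ => (1 : ℝ≥0∞)) y +
        {y | kap a (v j) y < 1}.indicator (fun _ => (1 : ℝ≥0∞)) y ≤ 1 +
        ({y | kap a (u j) y < 1} ∩ {y | kap a (v j) y < 1}).indicator (fun _ => (1 : ℝ≥0∞)) y := by
      by_cases h1 : kap a (u j) y < 1 <;> by_cases h2 : kap a (v j) y < 1 <;>
        simp [Set.indicator, h1, h2]
    exact this.trans (add_le_add le_rfl le_add_self)

lemma approx_all (hn : 1 ≤ n) {l : ℝ} (hl : 0 < l) {x : E n} (hx : x ≠ 0) :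
    Approx (mu n) (Ker l) n l x 0 ∧ Approx (mu n) (Ker l) n l 0 x := by
  obtain ⟨a, r, hr, hi, h0, hxa, h⟩ := exists_iso hx
  have hr' : (r : ℝ) ≠ 0 := by exact_mod_cast hr.ne'
  have h' : inversion a r x = 0 := by rw [← h, EuclideanGeometry.inversion_inversion a hr']
  have a1 := approx hn a hr hi hl hxa
  have a2 := approx hn a hr hi hl h0
  rw [h'] at a1
  rw [h] at a2
  exact ⟨a1, a2⟩

theorem sphere_main (hn : 1 ≤ n) {l p : ℝ} (hl : 0 < l) (hp : p * (n + l) = n)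
    {C : ℝ≥0} {F G : E n → ℝ≥0} (hF : F ∈ cls (mu n) p C) (hG : G ∈ cls (mu n) p C) :
    pot (mu n) (Ker l) (fun _ => 1) 0 ≤ (mu n) Set.univ ^ (2 / p - 1) * en (mu n) (Ker l) F G := by
  have hn' : (0 : ℝ) < n := by exact_mod_cast hn
  have hpe : p = n / (n + l) := by rw [_root_.eq_div_iff (by positivity)]; exact hp
  refine abstract_main (d := n) (l := l) (b := n + l) rfl (by positivity) hl hp ?_ ?_ (ms_Ker l) (Ker_symm l)
    (Ker_le hl.le) (o := 0) ?_ (pot_const hn l) hF hG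
  · rw [hpe]; positivity
  · rw [hpe, div_lt_one (by positivity)]; linarith
  · filter_upwards [ae_Sg hn 0 0] with x hx
    exact approx_all hn hl hx.1

end
end RHLS

namespace RHLS
open MeasureTheory ENNReal Filter Topology
open scoped NNReal
section
variable {n : ℕ}

lemma gauss_norm (hn : 1 ≤ n) {l t : ℝ} (hl : 0 ≤ l) (ht : 0 < t) :
    ∫⁻ y : E n, ENNReal.ofReal (‖y‖ ^ (2 * l) * Real.exp (-t * ‖y‖ ^ (2:ℝ))) =
      ENNReal.ofReal (Real.pi ^ ((n:ℝ)/2) * Real.Gamma (l + n / 2) / Real.Gamma (n/2) *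
        t ^ (-(l + n/2))) := by
  have : Nonempty (Fin n) := ⟨⟨0, hn⟩⟩
  have hn0 : (0:ℝ) < n := by exact_mod_cast hn
  have hG1 : 0 < Real.Gamma (l + n / 2) := Real.Gamma_pos_of_pos (by positivity)
  have hG2 : 0 < Real.Gamma ((n:ℝ) / 2) := Real.Gamma_pos_of_pos (by positivity)
  have key := integral_fun_norm_addHaar (volume : Measure (E n))
    (fun r : ℝ => r ^ (2 * l) * Real.exp (-t * r ^ (2:ℝ)))
  have e1 : ∫ y in Set.Ioi (0:ℝ), y ^ (n - 1) • (y ^ (2 * l) * Real.exp (-t * y ^ (2:ℝ))) =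
      t ^ (-(l + n/2)) * (1/2) * Real.Gamma (l + n / 2) := by
    have := integral_rpow_mul_exp_neg_mul_rpow (p := 2) (q := n - 1 + 2 * l) (b := t)
      (by norm_num) (by linarith) ht
    have e2 : ((n:ℝ) - 1 + 2 * l + 1) / 2 = l + n / 2 := by ring
    rw [neg_div, e2] at this
    rw [← this]
    refine setIntegral_congr_fun measurableSet_Ioi (fun y hy => ?_)
    have hy : 0 < y := hy
    simp only [smul_eq_mul]
    rw [← mul_assoc, Real.rpow_add hy, ← Real.rpow_natCast, Nat.cast_sub hn, Nat.cast_one]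
  have e3 : (volume : Measure (E n)).real (Metric.ball 0 1) =
      Real.pi ^ ((n:ℝ)/2) / (n / 2 * Real.Gamma (n/2)) := by
    rw [Measure.real, EuclideanSpace.volume_ball]
    simp only [Fintype.card_fin, ofReal_one, one_pow, one_mul]
    rw [ENNReal.toReal_ofReal (by positivity), Real.Gamma_add_one (by positivity),
      Real.sqrt_eq_rpow, ← Real.rpow_natCast, ← Real.rpow_mul Real.pi_pos.le]
    congr 2; ring
  have key2 : ∫ y : E n, ‖y‖ ^ (2 * l) * Real.exp (-t * ‖y‖ ^ (2:ℝ)) =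
      Real.pi ^ ((n:ℝ)/2) * Real.Gamma (l + n / 2) / Real.Gamma (n/2) * t ^ (-(l + n/2)) := by
    rw [key, finrank_euclideanSpace, Fintype.card_fin, e1, e3]
    simp only [nsmul_eq_mul, smul_eq_mul]
    field_simp
  have hIntg : Integrable (fun y : E n => ‖y‖ ^ (2 * l) * Real.exp (-t * ‖y‖ ^ (2:ℝ))) := by
    refine Integrable.of_integral_ne_zero ?_
    rw [key2]
    have : 0 < t ^ (-(l + (n:ℝ)/2)) := Real.rpow_pos_of_pos ht _
    have := Real.pi_pos
    positivity
  rw [← key2, ofReal_integral_eq_lintegral_ofReal hIntg]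
  exact Eventually.of_forall fun y => by positivity

lemma gamma_lint {a r : ℝ} (ha : 0 < a) (hr : 0 < r) :
    ∫⁻ t in Set.Ioi (0:ℝ), ENNReal.ofReal (t ^ (a - 1) * Real.exp (-(r * t))) =
      ENNReal.ofReal (r ^ (-a) * Real.Gamma a) := by
  have key := Real.integral_rpow_mul_exp_neg_mul_Ioi ha hr
  have hG : 0 < Real.Gamma a := Real.Gamma_pos_of_pos ha
  have e : (1 / r) ^ a = r ^ (-a) := by
    rw [one_div, Real.inv_rpow hr.le, Real.rpow_neg hr.le]
  rw [e] at key
  rw [← key, ofReal_integral_eq_lintegral_ofReal]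
  · refine Integrable.of_integral_ne_zero ?_
    rw [key]
    have : 0 < r ^ (-a) := Real.rpow_pos_of_pos hr _
    positivity
  · filter_upwards [ae_restrict_mem measurableSet_Ioi] with t ht
    have : (0:ℝ) < t := ht
    simp only [Pi.zero_apply]
    positivity

lemma J_eq (hn : 1 ≤ n) {l : ℝ} (hl : 0 ≤ l) :
    ∫⁻ y : E n, ENNReal.ofReal (‖y‖ ^ (2 * l) * (1 + ‖y‖ ^ 2) ^ (-(n + l))) =
      ENNReal.ofReal (Real.pi ^ ((n:ℝ)/2) * Real.Gamma (l + n / 2) / Real.Gamma (n + l)) := by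
  have hn0 : (0:ℝ) < n := by exact_mod_cast hn
  have hG1 : 0 < Real.Gamma (l + n / 2) := Real.Gamma_pos_of_pos (by positivity)
  have hG2 : 0 < Real.Gamma ((n:ℝ) / 2) := Real.Gamma_pos_of_pos (by positivity)
  have hG3 : 0 < Real.Gamma (n + l) := Real.Gamma_pos_of_pos (by positivity)
  have hpi := Real.pi_pos
  have hms : Measurable (fun y : E n => ENNReal.ofReal (‖y‖ ^ (2 * l) * (1 + ‖y‖ ^ 2) ^ (-(n + l)))) := by
    fun_prop
  have h1 : ENNReal.ofReal (Real.Gamma (n + l)) *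
      ∫⁻ y : E n, ENNReal.ofReal (‖y‖ ^ (2 * l) * (1 + ‖y‖ ^ 2) ^ (-(n + l))) =
      ∫⁻ y : E n, ∫⁻ t in Set.Ioi (0:ℝ), ENNReal.ofReal
        (‖y‖ ^ (2 * l) * (t ^ (n + l - 1) * Real.exp (-((1 + ‖y‖ ^ 2) * t)))) := by
    rw [← lintegral_const_mul _ hms]
    refine lintegral_congr fun y => ?_
    have hq : Measurable (fun t : ℝ => ENNReal.ofReal (t ^ (n + l - 1) * Real.exp (-((1 + ‖y‖ ^ 2) * t)))) := by
      fun_prop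
    have hy : 0 ≤ ‖y‖ ^ (2 * l) := by positivity
    simp only [ENNReal.ofReal_mul hy]
    rw [lintegral_const_mul _ hq, gamma_lint (by positivity) (by positivity),
      mul_left_comm, ← ENNReal.ofReal_mul hG3.le, mul_comm (Real.Gamma _)]
  have h2 : ∫⁻ y : E n, ∫⁻ t in Set.Ioi (0:ℝ), ENNReal.ofReal
        (‖y‖ ^ (2 * l) * (t ^ (n + l - 1) * Real.exp (-((1 + ‖y‖ ^ 2) * t)))) =
      ENNReal.ofReal (Real.pi ^ ((n:ℝ)/2) * Real.Gamma (l + n / 2)) := by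
    have hm2 : Measurable (Function.uncurry fun (y : E n) (t : ℝ) => ENNReal.ofReal
        (‖y‖ ^ (2 * l) * (t ^ (n + l - 1) * Real.exp (-((1 + ‖y‖ ^ 2) * t))))) := by
      unfold Function.uncurry
      fun_prop
    rw [lintegral_lintegral_swap hm2.aemeasurable]
    have h3 : ∀ t ∈ Set.Ioi (0:ℝ), ∫⁻ y : E n, ENNReal.ofReal
        (‖y‖ ^ (2 * l) * (t ^ (n + l - 1) * Real.exp (-((1 + ‖y‖ ^ 2) * t)))) =
        ENNReal.ofReal (Real.pi ^ ((n:ℝ)/2) * Real.Gamma (l + n / 2) / Real.Gamma (n/2)) *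
        ENNReal.ofReal (t ^ ((n:ℝ)/2 - 1) * Real.exp (-(1 * t))) := by
      intro t ht
      have ht : 0 < t := ht
      have hc : 0 ≤ t ^ (n + l - 1) * Real.exp (-(1 * t)) := by positivity
      have hq : Measurable (fun y : E n => ENNReal.ofReal (‖y‖ ^ (2 * l) * Real.exp (-t * ‖y‖ ^ (2:ℝ)))) := by
        fun_prop
      have : ∀ y : E n, ENNReal.ofReal
        (‖y‖ ^ (2 * l) * (t ^ (n + l - 1) * Real.exp (-((1 + ‖y‖ ^ 2) * t)))) =
         ENNReal.ofReal (t ^ (n + l - 1) * Real.exp (-(1 * t))) *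
         ENNReal.ofReal (‖y‖ ^ (2 * l) * Real.exp (-t * ‖y‖ ^ (2:ℝ))) := by
        intro y
        rw [← ENNReal.ofReal_mul hc]
        congr 1
        have : -((1 + ‖y‖ ^ 2) * t) = -(1 * t) + -t * ‖y‖ ^ (2:ℝ) := by
          rw [Real.rpow_two]; ring
        rw [this, Real.exp_add]; ring
      simp only [this]
      rw [lintegral_const_mul _ hq, gauss_norm hn hl ht, ← ENNReal.ofReal_mul hc,
        ← ENNReal.ofReal_mul (by positivity)]
      congr 1
      have : (n:ℝ)/2 - 1 = (n + l - 1) + (-(l + n/2)) := by ring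
      rw [this, Real.rpow_add ht]; ring
    rw [setLIntegral_congr_fun measurableSet_Ioi h3]
    have hq : Measurable (fun t : ℝ => ENNReal.ofReal (t ^ ((n:ℝ)/2 - 1) * Real.exp (-(1 * t)))) := by
      fun_prop
    rw [lintegral_const_mul _ hq, gamma_lint (by positivity) one_pos, Real.one_rpow, one_mul,
      ← ENNReal.ofReal_mul (by positivity)]
    congr 1
    field_simp
  rw [h2] at h1
  rw [ENNReal.ofReal_div_of_pos hG3, ← h1, mul_comm (ENNReal.ofReal (Real.Gamma _)), ENNReal.mul_div_cancel_right]
  · simpa using hG3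
  · exact ENNReal.ofReal_ne_top

lemma pot_zero (hn : 1 ≤ n) {l : ℝ} (hl : 0 ≤ l) :
    pot (mu n) (Ker l) (fun _ => 1) (0 : E n) =
      ENNReal.ofReal (2 ^ (n + 2 * l) * (Real.pi ^ ((n:ℝ)/2) * Real.Gamma (l + n / 2) / Real.Gamma (n + l))) := by
  unfold pot mu
  have hq : Measurable (fun y : E n => ((w y ^ (n:ℝ) : ℝ≥0) : ℝ≥0∞)) :=
    (ms_w.pow_const _).coe_nnreal_ennreal
  have hq2 : Measurable (fun y : E n => ENNReal.ofReal (‖y‖ ^ (2 * l) * (1 + ‖y‖ ^ 2) ^ (-(n + l)))) := by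
    fun_prop
  rw [lintegral_withDensity_eq_lintegral_mul _ hq ((ms_Kl (ms_Ker l) 0).mul_const 1).coe_nnreal_ennreal]
  rw [ENNReal.ofReal_mul (by positivity), ← J_eq hn hl, ← lintegral_const_mul _ hq2]
  refine lintegral_congr fun y => ?_
  simp only [Pi.mul_apply, mul_one]
  rw [← ENNReal.coe_mul, ← ENNReal.ofReal_coe_nnreal, ← ENNReal.ofReal_mul (by positivity)]
  congr 1
  unfold Ker
  push_cast
  rw [coe_w, coe_w]
  have h0 : (0:ℝ) < 1 + ‖y‖ ^ 2 := by positivity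
  have : 2 / (1 + ‖(0:E n)‖ ^ 2) * (2 / (1 + ‖y‖ ^ 2)) * dist 0 y ^ 2 = 
    (2 ^ 2) * (‖y‖ ^ 2) * (1 + ‖y‖ ^ 2)⁻¹ := by
    simp; ring
  rw [this, Real.mul_rpow (by positivity) (by positivity), Real.mul_rpow (by positivity) (by positivity),
    div_eq_mul_inv, Real.mul_rpow (by positivity) (by positivity), ← Real.rpow_natCast 2 2, 
    ← Real.rpow_natCast ‖y‖ 2, ← Real.rpow_mul (by positivity), ← Real.rpow_mul (by positivity)]
  rw [Real.rpow_natCast ‖y‖ 2] 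
  rw [Real.inv_rpow h0.le, Real.inv_rpow h0.le, Real.rpow_neg h0.le, Real.rpow_add two_pos, Real.rpow_add h0]
  push_cast
  field_simp

lemma mu_univ (hn : 1 ≤ n) :
    (mu n) Set.univ = ENNReal.ofReal (2 ^ (n:ℝ) * (Real.pi ^ ((n:ℝ)/2) * Real.Gamma (n / 2) / Real.Gamma n)) := by
  have := pot_zero hn (l := 0) le_rfl
  simp only [mul_zero, add_zero, zero_add] at this
  rw [← this]
  unfold pot Ker
  simp

end
end RHLS

namespace RHLS
open MeasureTheory ENNReal Filter Topology
open scoped NNReal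
section
variable {n : ℕ}

lemma en_scale (μ : Measure (E n)) (K : E n → E n → ℝ≥0) (F G : E n → ℝ≥0) (a b : ℝ≥0) :
    en μ K (fun x => a * F x) (fun x => b * G x) = (a * b : ℝ≥0) * en μ K F G := by
  unfold en
  rw [← lintegral_const_mul' _ _ ENNReal.coe_ne_top]
  refine lintegral_congr fun x => ?_
  rw [← lintegral_const_mul' _ _ ENNReal.coe_ne_top]
  refine lintegral_congr fun y => ?_
  rw [← ENNReal.coe_mul]
  congr 1
  ring

lemma norm_cls (μ : Measure (E n)) {p : ℝ} (hp : 0 < p) {C : ℝ≥0} {F : E n → ℝ≥0}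
    (hF : Measurable F) (hb : ∀ x, F x ≤ C) {a : ℝ≥0} (ha : a ≠ 0)
    (h : (a : ℝ≥0∞) = (∫⁻ x, ((F x ^ p : ℝ≥0) : ℝ≥0∞) ∂μ) ^ (1 / p)) :
    (fun x => a⁻¹ * F x) ∈ cls μ p (a⁻¹ * C) := by
  refine ⟨hF.const_mul _, fun x => mul_le_mul_right (hb x) _, ?_⟩
  have h2 : ((a ^ p : ℝ≥0) : ℝ≥0∞) = ∫⁻ x, ((F x ^ p : ℝ≥0) : ℝ≥0∞) ∂μ := by
    rw [ENNReal.coe_rpow_of_nonneg _ hp.le, h, ← ENNReal.rpow_mul, one_div_mul_cancel hp.ne', ENNReal.rpow_one]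
  simp only [NNReal.mul_rpow, ENNReal.coe_mul]
  rw [lintegral_const_mul' _ _ ENNReal.coe_ne_top, ← h2, ← ENNReal.coe_mul, NNReal.inv_rpow,
    inv_mul_cancel₀, ENNReal.coe_one]
  simp [NNReal.rpow_eq_zero_iff, ha]

lemma cls_mono (μ : Measure (E n)) {p : ℝ} {C D : ℝ≥0} (h : C ≤ D) : cls μ p C ⊆ cls μ p D :=
  fun _ hF => ⟨hF.1, fun x => (hF.2.1 x).trans h, hF.2.2⟩

lemma bil_bdd (hn : 1 ≤ n) {l p : ℝ} (hl : 0 < l) (hp : p * (n + l) = n) {C : ℝ≥0}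
    {F G : E n → ℝ≥0} (hF : Measurable F) (hG : Measurable G) (bF : ∀ x, F x ≤ C)
    (bG : ∀ x, G x ≤ C) :
    pot (mu n) (Ker l) (fun _ => 1) 0 * ((∫⁻ x, ((F x ^ p : ℝ≥0) : ℝ≥0∞) ∂(mu n)) ^ (1 / p) *
      (∫⁻ x, ((G x ^ p : ℝ≥0) : ℝ≥0∞) ∂(mu n)) ^ (1 / p)) ≤
      (mu n) Set.univ ^ (2 / p - 1) * en (mu n) (Ker l) F G := by
  have hn0 : (0:ℝ) < n := by exact_mod_cast hn
  have hp0 : 0 < p := by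
    by_contra h
    push Not at h
    nlinarith
  have fin : ∀ {F : E n → ℝ≥0}, (∀ x, F x ≤ C) →
      (∫⁻ x, ((F x ^ p : ℝ≥0) : ℝ≥0∞) ∂(mu n)) ^ (1 / p) ≠ ⊤ := by
    intro F bF
    refine ENNReal.rpow_ne_top_of_nonneg (by positivity) (ne_of_lt ?_)
    refine lt_of_le_of_lt (lintegral_mono (fun x => ENNReal.coe_le_coe.2 (NNReal.rpow_le_rpow (bF x) hp0.le))) ?_
    rw [lintegral_const]
    exact ENNReal.mul_lt_top ENNReal.coe_lt_top (measure_lt_top _ _)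
  obtain ⟨a, ha⟩ := WithTop.ne_top_iff_exists.1 (fin bF)
  change (a : ℝ≥0∞) = _ at ha
  obtain ⟨b, hb⟩ := WithTop.ne_top_iff_exists.1 (fin bG)
  change (b : ℝ≥0∞) = _ at hb
  rw [← ha, ← hb]
  rcases eq_or_ne a 0 with rfl | ha0
  · simp
  rcases eq_or_ne b 0 with rfl | hb0
  · simp
  have c1 := cls_mono (mu n) (le_max_left (a⁻¹ * C) (b⁻¹ * C)) (norm_cls (mu n) hp0 hF bF ha0 ha)
  have c2 := cls_mono (mu n) (le_max_right (a⁻¹ * C) (b⁻¹ * C)) (norm_cls (mu n) hp0 hG bG hb0 hb)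
  have := sphere_main hn hl hp c1 c2
  rw [en_scale] at this
  calc _ ≤ ((mu n) Set.univ ^ (2 / p - 1) * ((a⁻¹ * b⁻¹ : ℝ≥0) * en (mu n) (Ker l) F G)) * ((a:ℝ≥0∞) * b) :=
        mul_le_mul_left this _
    _ = (mu n) Set.univ ^ (2 / p - 1) * en (mu n) (Ker l) F G * ((a⁻¹ * b⁻¹ * (a * b) : ℝ≥0)) := by
        push_cast; ring
    _ = _ := by
        have : a⁻¹ * b⁻¹ * (a * b) = 1 := by field_simp
        rw [this]; simp

lemma tend_trunc (μ : Measure (E n)) {p : ℝ} (hp : 0 < p) {F : E n → ℝ≥0} (hF : Measurable F) :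
    Tendsto (fun k : ℕ => (∫⁻ x, (((min (F x) k) ^ p : ℝ≥0) : ℝ≥0∞) ∂μ) ^ (1 / p)) atTop
      (𝓝 ((∫⁻ x, ((F x ^ p : ℝ≥0) : ℝ≥0∞) ∂μ) ^ (1 / p))) := by
  refine ENNReal.continuous_rpow_const.continuousAt.tendsto.comp ?_
  refine lintegral_tendsto_of_tendsto_of_monotone
    (fun k => ((hF.min measurable_const).pow_const p).coe_nnreal_ennreal.aemeasurable) ?_ ?_
  · refine Eventually.of_forall fun x i j hij => ENNReal.coe_le_coe.2 (NNReal.rpow_le_rpow ?_ hp.le)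
    exact min_le_min le_rfl (by exact_mod_cast hij)
  · refine Eventually.of_forall fun x => ?_
    refine tendsto_const_nhds.congr' ?_
    obtain ⟨m, hm⟩ := exists_nat_ge (F x)
    filter_upwards [eventually_ge_atTop m] with k hk
    rw [min_eq_left]
    exact hm.trans (by exact_mod_cast hk)

lemma bil_sphere (hn : 1 ≤ n) {l p : ℝ} (hl : 0 < l) (hp : p * (n + l) = n)
    {F G : E n → ℝ≥0} (hF : Measurable F) (hG : Measurable G) :
    pot (mu n) (Ker l) (fun _ => 1) 0 * ((∫⁻ x, ((F x ^ p : ℝ≥0) : ℝ≥0∞) ∂(mu n)) ^ (1 / p) *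
      (∫⁻ x, ((G x ^ p : ℝ≥0) : ℝ≥0∞) ∂(mu n)) ^ (1 / p)) ≤
      (mu n) Set.univ ^ (2 / p - 1) * en (mu n) (Ker l) F G := by
  have hn0 : (0:ℝ) < n := by exact_mod_cast hn
  have hp0 : 0 < p := by
    by_contra h
    push Not at h
    nlinarith
  have t1 := tend_trunc (mu n) hp0 hF
  have t2 := tend_trunc (mu n) hp0 hG
  rcases eq_or_ne ((∫⁻ x, ((F x ^ p : ℝ≥0) : ℝ≥0∞) ∂(mu n)) ^ (1 / p)) 0 with h1 | h1
  · rw [h1]; simp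
  rcases eq_or_ne ((∫⁻ x, ((G x ^ p : ℝ≥0) : ℝ≥0∞) ∂(mu n)) ^ (1 / p)) 0 with h2 | h2
  · rw [h2]; simp
  have t3 := ENNReal.Tendsto.const_mul (a := pot (mu n) (Ker l) (fun _ => 1) 0)
    (ENNReal.Tendsto.mul t1 (Or.inl h1) t2 (Or.inl h2)) (Or.inl (mul_ne_zero h1 h2))
  refine le_of_tendsto t3 (Eventually.of_forall fun k => ?_)
  refine (bil_bdd hn hl hp (C := k) (hF.min measurable_const) (hG.min measurable_const)
    (fun x => min_le_right _ _) (fun x => min_le_right _ _)).trans ?_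
  refine mul_le_mul_right ?_ _
  unfold en
  refine lintegral_mono fun x => lintegral_mono fun y => ENNReal.coe_le_coe.2 ?_
  gcongr
  · exact min_le_left _ _
  · exact min_le_left _ _

lemma lint_mu {h : E n → ℝ≥0} (hh : Measurable h) :
    ∫⁻ x, (h x : ℝ≥0∞) ∂(mu n) = ∫⁻ x, ((w x ^ (n:ℝ) * h x : ℝ≥0) : ℝ≥0∞) := by
  unfold mu
  rw [lintegral_withDensity_eq_lintegral_mul _ (ms_w.pow_const _).coe_nnreal_ennreal hh.coe_nnreal_ennreal]
  simp only [Pi.mul_apply, ENNReal.coe_mul]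

lemma bil_Rn (hn : 1 ≤ n) {l p : ℝ} (hl : 0 < l) (hp : p * (n + l) = n)
    {f g : E n → ℝ≥0} (hf : Measurable f) (hg : Measurable g) :
    pot (mu n) (Ker l) (fun _ => 1) (0 : E n) * ((∫⁻ x, ((f x ^ p : ℝ≥0) : ℝ≥0∞)) ^ (1 / p) *
      (∫⁻ x, ((g x ^ p : ℝ≥0) : ℝ≥0∞)) ^ (1 / p)) ≤
      (mu n) Set.univ ^ (2 / p - 1) *
        ∫⁻ x, ∫⁻ y, ((f x * g y * nndist x y ^ (2 * l) : ℝ≥0) : ℝ≥0∞) := by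
  set W : E n → ℝ≥0 := fun x => w x ^ (n + l) with hW
  have mW : Measurable W := ms_w.pow_const _
  have W0 : ∀ x, W x ≠ 0 := fun x => (NNReal.rpow_pos (w_pos x)).ne'
  have hWp : ∀ x, W x ^ p = w x ^ (n:ℝ) := fun x => by
    rw [hW, ← NNReal.rpow_mul, mul_comm, hp]
  have hWl : ∀ x, W x = w x ^ (n:ℝ) * w x ^ l := fun x => NNReal.rpow_add (w_pos x).ne' _ _
  have w0 : ∀ x : E n, w x ^ (n:ℝ) ≠ 0 := fun x => (NNReal.rpow_pos (w_pos x)).ne'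
  have key := bil_sphere hn hl hp (hf.div mW) (hg.div mW)
  have e1 : ∀ {f : E n → ℝ≥0}, Measurable f → ∫⁻ x, (((f / W) x ^ p : ℝ≥0) : ℝ≥0∞) ∂(mu n) =
      ∫⁻ x, ((f x ^ p : ℝ≥0) : ℝ≥0∞) := by
    intro f hf
    rw [lint_mu ((hf.div mW).pow_const p)]
    refine lintegral_congr fun x => ?_
    rw [Pi.div_apply, NNReal.div_rpow, hWp, mul_div_cancel₀ _ (w0 x)]
  have e2 : en (mu n) (Ker l) (f / W) (g / W) =
      ∫⁻ x, ∫⁻ y, ((f x * g y * nndist x y ^ (2 * l) : ℝ≥0) : ℝ≥0∞) := by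
    unfold en
    have i1 : ∀ x, ∫⁻ y, (((f / W) x * (g / W) y * Ker l x y : ℝ≥0) : ℝ≥0∞) ∂(mu n) =
        ((w x ^ (n:ℝ) : ℝ≥0) : ℝ≥0∞)⁻¹ * ∫⁻ y, ((f x * g y * nndist x y ^ (2 * l) : ℝ≥0) : ℝ≥0∞) := by
      intro x
      have hq : Measurable (fun y => (f / W) x * (g / W) y * Ker l x y) :=
        ((hg.div mW).const_mul _).mul (ms_Kl (ms_Ker l) x)
      rw [lint_mu hq, ← ENNReal.coe_inv (w0 x),
        ← lintegral_const_mul' _ _ ENNReal.coe_ne_top]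
      refine lintegral_congr fun y => ?_
      rw [← ENNReal.coe_mul]
      congr 1
      have hx := w0 x
      have hy := w0 y
      have hx' : w x ^ l ≠ 0 := (NNReal.rpow_pos (w_pos x)).ne'
      have hy' : w y ^ l ≠ 0 := (NNReal.rpow_pos (w_pos y)).ne'
      unfold Ker
      rw [Pi.div_apply, Pi.div_apply, hWl, hWl, NNReal.mul_rpow, NNReal.mul_rpow, NNReal.rpow_mul, NNReal.rpow_two]
      field_simp
    simp only [i1]
    unfold mu
    rw [lintegral_withDensity_eq_lintegral_mul _ (ms_w.pow_const _).coe_nnreal_ennreal]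
    · refine lintegral_congr fun x => ?_
      rw [Pi.mul_apply, ← mul_assoc, ENNReal.mul_inv_cancel (by simpa using w0 x) ENNReal.coe_ne_top, one_mul]
    · refine (ms_w.pow_const _).coe_nnreal_ennreal.inv.mul (Measurable.lintegral_prod_right' (f := fun z : E n × E n => ((f z.1 * g z.2 * nndist z.1 z.2 ^ (2 * l) : ℝ≥0) : ℝ≥0∞)) ?_)
      have h1 : Measurable (fun z : E n × E n => f z.1) := hf.comp measurable_fst
      have h2 : Measurable (fun z : E n × E n => g z.2) := hg.comp measurable_snd
      exact ((h1.mul h2).mul (by fun_prop)).coe_nnreal_ennreal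
  rw [e1 hf, e1 hg, e2] at key
  exact key

end
end RHLS

namespace RHLS
open MeasureTheory ENNReal Filter Topology
open scoped NNReal
section
variable {n : ℕ}

lemma dual_final {V : E n → ℝ≥0∞} (hV : Measurable V) {c : ℝ≥0∞} {p q : ℝ} (hp : 0 < p) (hq : q < 0)
    (hpq : 1 / p + 1 / q = 1)
    (H : ∀ g : E n → ℝ≥0, Measurable g →
      c * (∫⁻ x, ((g x ^ p : ℝ≥0) : ℝ≥0∞)) ^ (1 / p) ≤ ∫⁻ x, g x * V x) :
    c ≤ (∫⁻ x, V x ^ q) ^ (1 / q) := by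
  rcases eq_or_ne c 0 with rfl | hc
  · exact zero_le
  have hpq' : (q - 1) * p = q := by
    have := hq.ne
    have := hp.ne'
    field_simp at hpq
    linarith
  -- V is a.e. positive
  have hV0 : ∀ᵐ x, V x ≠ 0 := by
    have mS : MeasurableSet {x | V x = 0} := hV (measurableSet_singleton 0)
    have h := H ({x | V x = 0}.indicator (fun _ => 1)) (measurable_const.indicator mS)
    have r : ∫⁻ x, (({x | V x = 0}.indicator (fun _ => (1:ℝ≥0)) x : ℝ≥0) : ℝ≥0∞) * V x = 0 := by
      rw [← lintegral_zero (μ := (volume : Measure (E n)))]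
      refine lintegral_congr fun x => ?_
      by_cases hx : V x = 0
      · simp [hx]
      · rw [Set.indicator_of_notMem (by simpa using hx)]; simp
    have s : ∫⁻ x, (({x | V x = 0}.indicator (fun _ => (1:ℝ≥0)) x ^ p : ℝ≥0) : ℝ≥0∞) =
        volume {x | V x = 0} := by
      rw [← lintegral_indicator_one mS]
      refine lintegral_congr fun x => ?_
      by_cases hx : V x = 0
      · rw [Set.indicator_of_mem (by simpa using hx), Set.indicator_of_mem (by simpa using hx)]; simp
      · rw [Set.indicator_of_notMem (by simpa using hx), Set.indicator_of_notMem (by simpa using hx)]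
        simp [hp.ne']
    rw [r, s] at h
    have h := (mul_eq_zero.1 (le_antisymm h zero_le)).resolve_left hc
    rw [ENNReal.rpow_eq_zero_iff_of_pos (by positivity)] at h
    rw [ae_iff]
    simpa using h
  set S : ℕ → Set (E n) := fun k => {x | ‖x‖ ≤ k ∧ (k:ℝ≥0∞)⁻¹ ≤ V x ∧ V x ≠ ⊤} with hS
  have mS : ∀ k, MeasurableSet (S k) := fun k =>
    (measurableSet_le measurable_norm measurable_const).inter
      ((measurableSet_le measurable_const hV).inter (hV (measurableSet_singleton ⊤).compl))
  have mVq : Measurable (fun x => V x ^ q) := hV.pow_const q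
  have step : ∀ k : ℕ, c ≤ (∫⁻ x, (S k).indicator (fun x => V x ^ q) x) ^ (1 / q) := by
    intro k
    have fin : ∫⁻ x, (S k).indicator (fun x => V x ^ q) x ≠ ⊤ := by
      rw [lintegral_indicator (mS k)]
      refine ne_of_lt (lt_of_le_of_lt (setLIntegral_mono (g := fun _ => ((k:ℝ≥0∞)⁻¹) ^ q) measurable_const (fun x hx => ?_)) ?_)
      · have e : ∀ z : ℝ≥0∞, z ^ q = (z ^ (-q))⁻¹ := fun z => by rw [← ENNReal.rpow_neg, neg_neg]
        simp only [e]
        exact ENNReal.inv_le_inv.2 (ENNReal.rpow_le_rpow hx.2.1 (by linarith))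
      · rw [setLIntegral_const]
        refine ENNReal.mul_lt_top ?_ ?_
        · rw [ENNReal.inv_rpow, ← ENNReal.rpow_neg]
          exact ENNReal.rpow_lt_top_of_nonneg (by linarith) (by simp)
        · refine lt_of_le_of_lt (measure_mono (t := Metric.closedBall 0 k) ?_) measure_closedBall_lt_top
          intro x hx
          simpa using hx.1
    set A := ∫⁻ x, (S k).indicator (fun x => V x ^ q) x with hA
    rcases eq_or_ne A 0 with h0 | h0
    · rw [h0, ENNReal.zero_rpow_of_neg (one_div_neg.2 hq)]; exact le_top
    have h := H ((S k).indicator fun x => (V x).toNNReal ^ (q - 1))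
      ((hV.ennreal_toNNReal.pow_const _).indicator (mS k))
    have pos : ∀ x ∈ S k, ∃ v : ℝ≥0, V x = v ∧ v ≠ 0 := by
      intro x hx
      obtain ⟨v, hv⟩ := WithTop.ne_top_iff_exists.1 hx.2.2
      change (v : ℝ≥0∞) = _ at hv
      refine ⟨v, hv.symm, ?_⟩
      rintro rfl
      have := hx.2.1
      rw [← hv] at this
      simp at this
    have e1 : ∫⁻ x, (((S k).indicator (fun x => (V x).toNNReal ^ (q - 1)) x ^ p : ℝ≥0) : ℝ≥0∞) = A := by
      refine lintegral_congr fun x => ?_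
      by_cases hx : x ∈ S k
      · obtain ⟨v, hv, v0⟩ := pos x hx
        rw [Set.indicator_of_mem hx, Set.indicator_of_mem hx, ← NNReal.rpow_mul, hpq', hv,
          ENNReal.toNNReal_coe, ENNReal.coe_rpow_of_ne_zero v0]
      · rw [Set.indicator_of_notMem hx, Set.indicator_of_notMem hx, NNReal.zero_rpow hp.ne']; simp
    have e2 : ∫⁻ x, (((S k).indicator (fun x => (V x).toNNReal ^ (q - 1)) x : ℝ≥0) : ℝ≥0∞) * V x = A := by
      refine lintegral_congr fun x => ?_
      by_cases hx : x ∈ S k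
      · obtain ⟨v, hv, v0⟩ := pos x hx
        rw [Set.indicator_of_mem hx, Set.indicator_of_mem hx, hv,
          ENNReal.toNNReal_coe, ← ENNReal.coe_rpow_of_ne_zero v0, ← ENNReal.coe_mul]
        rw [NNReal.rpow_sub_one v0, div_mul_cancel₀ _ v0]
      · rw [Set.indicator_of_notMem hx, Set.indicator_of_notMem hx]; simp
    rw [e1, e2] at h
    have hq1 : 1 / q = 1 + -(1 / p) := by linarith
    rw [hq1, ENNReal.rpow_add _ _ h0 fin, ENNReal.rpow_one]
    calc c = c * A ^ (1 / p) * A ^ (-(1 / p)) := by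
          rw [mul_assoc, ← ENNReal.rpow_add _ _ h0 fin]; simp
      _ ≤ _ := mul_le_mul_left h _
  have lim : Tendsto (fun k => ∫⁻ x, (S k).indicator (fun x => V x ^ q) x) atTop (𝓝 (∫⁻ x, V x ^ q)) := by
    refine lintegral_tendsto_of_tendsto_of_monotone (fun k => (mVq.indicator (mS k)).aemeasurable) ?_ ?_
    · refine Eventually.of_forall fun x i j hij => ?_
      refine Set.indicator_le_indicator_of_subset ?_ (fun _ => zero_le) x
      intro y hy
      refine ⟨hy.1.trans (by exact_mod_cast hij), le_trans ?_ hy.2.1, hy.2.2⟩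
      exact ENNReal.inv_le_inv.2 (by exact_mod_cast hij)
    · filter_upwards [hV0] with x hx
      refine tendsto_const_nhds.congr' ?_
      by_cases ht : V x = ⊤
      · refine Eventually.of_forall fun k => ?_
        have hk : x ∉ S k := fun h => h.2.2 ht
        beta_reduce
        rw [Set.indicator_of_notMem hk, ht, ENNReal.top_rpow_of_neg hq]
      · obtain ⟨m, hm⟩ := exists_nat_ge ‖x‖
        obtain ⟨m', hm'⟩ := ENNReal.exists_inv_nat_lt hx
        filter_upwards [eventually_ge_atTop m, eventually_ge_atTop m'] with k hk hk'
        rw [Set.indicator_of_mem]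
        refine ⟨hm.trans (by exact_mod_cast hk), le_trans ?_ hm'.le, ht⟩
        exact ENNReal.inv_le_inv.2 (by exact_mod_cast hk')
  exact ge_of_tendsto (ENNReal.continuous_rpow_const.continuousAt.tendsto.comp lim)
    (Eventually.of_forall step)

/-- the sharp constant -/
noncomputable def NN (n : ℕ) (α : ℝ) : ℝ :=
  Real.pi ^ (((n : ℝ) - α) / 2) * (Real.Gamma (α / 2) / Real.Gamma (((n : ℝ) + α) / 2)) *
              (Real.Gamma ((n : ℝ) / 2) / Real.Gamma (n : ℝ)) ^ (-(α / (n : ℝ)))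

lemma NN_pos (hn : 1 ≤ n) {α : ℝ} (hα : (n:ℝ) < α) : 0 < NN n α := by
  have hn0 : (0:ℝ) < n := by exact_mod_cast hn
  have ha : 0 < α := hn0.trans hα
  have h1 : 0 < Real.Gamma (α / 2) := Real.Gamma_pos_of_pos (by positivity)
  have h2 : 0 < Real.Gamma (((n : ℝ) + α) / 2) := Real.Gamma_pos_of_pos (by positivity)
  have h3 : 0 < Real.Gamma ((n : ℝ) / 2) := Real.Gamma_pos_of_pos (by positivity)
  have h4 : 0 < Real.Gamma (n : ℝ) := Real.Gamma_pos_of_pos (by positivity)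
  have := Real.pi_pos
  unfold NN
  positivity

lemma const_eq (hn : 1 ≤ n) {α l p : ℝ} (hl : 0 < l) (hα : α = n + 2 * l) (hp : p * (n + l) = n) :
    pot (mu n) (Ker l) (fun _ => 1) (0 : E n) =
      (mu n) Set.univ ^ (2 / p - 1) * ENNReal.ofReal (NN n α) := by
  have hn0 : (0:ℝ) < n := by exact_mod_cast hn
  have ha : 0 < α := by rw [hα]; positivity
  have h3 : 0 < Real.Gamma ((n : ℝ) / 2) := Real.Gamma_pos_of_pos (by positivity)
  have h4 : 0 < Real.Gamma (n : ℝ) := Real.Gamma_pos_of_pos (by positivity)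
  have hpi := Real.pi_pos
  have hpp : p = n / (n + l) := by
    rw [_root_.eq_div_iff (by positivity)]; exact hp
  have e : 2 / p - 1 = α / n := by
    rw [hpp, hα]; field_simp; ring
  rw [pot_zero hn hl.le, mu_univ hn, e, ENNReal.ofReal_rpow_of_pos (by positivity),
    ← ENNReal.ofReal_mul (by positivity)]
  congr 1
  unfold NN
  rw [← hα, show l + n / 2 = α / 2 by rw [hα]; ring, show (n:ℝ) + l = (n + α) / 2 by rw [hα]; ring]
  have hR : 0 < Real.Gamma ((n : ℝ) / 2) / Real.Gamma (n : ℝ) := by positivity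
  rw [mul_div_assoc (Real.pi ^ ((n:ℝ)/2)) (Real.Gamma ((n : ℝ) / 2)), mul_div_assoc]
  set R := Real.Gamma ((n : ℝ) / 2) / Real.Gamma (n : ℝ)
  rw [Real.mul_rpow (by positivity) (by positivity), Real.mul_rpow (by positivity) (by positivity),
    ← Real.rpow_mul (by positivity), ← Real.rpow_mul (by positivity), Real.rpow_neg hR.le,
    show (n:ℝ) * (α / n) = α by field_simp, show (n:ℝ) / 2 * (α / n) = α / 2 by field_simp,
    show ((n:ℝ) / 2) = α / 2 + (n - α) / 2 by ring, Real.rpow_add hpi]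
  have : R ^ (α / (n:ℝ)) ≠ 0 := (Real.rpow_pos_of_pos hR _).ne'
  field_simp

lemma final (n : ℕ) (hn : 1 ≤ n) (α p q : ℝ)
    (hα : (n : ℝ) < α)
    (hp : p = 2 * n / ((n : ℝ) + α)) (hq : q = 2 * n / ((n : ℝ) - α))
    (f : E n → ℝ) (hf : Measurable f) (f0 : ∀ x, 0 ≤ f x) (hi : Integrable (fun x => |f x| ^ p)) :
    ENNReal.ofReal (NN n α * (∫ x, |f x| ^ p) ^ (1 / p)) ≤
      (∫⁻ x, (∫⁻ y, ENNReal.ofReal (f y * dist x y ^ (α - n))) ^ q) ^ (1 / q) := by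
  have hn0 : (0:ℝ) < n := by exact_mod_cast hn
  have ha : 0 < α := hn0.trans hα
  have hp0 : 0 < p := by rw [hp]; positivity
  have hq0 : q < 0 := by rw [hq]; exact div_neg_of_pos_of_neg (by positivity) (by linarith)
  set l := (α - n) / 2 with hl
  have hl0 : 0 < l := by rw [hl]; linarith
  have hpl : p * (n + l) = n := by rw [hp, hl]; field_simp; ring
  have hal : α = n + 2 * l := by rw [hl]; ring
  set φ : E n → ℝ≥0 := fun x => (f x).toNNReal with hφ
  have mφ : Measurable φ := hf.real_toNNReal
  have cφ : ∀ x, (φ x : ℝ) = f x := fun x => Real.coe_toNNReal _ (f0 x)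
  have eV : ∀ x, ∫⁻ y, ENNReal.ofReal (f y * dist x y ^ (α - n)) =
      ∫⁻ y, ((φ y * nndist x y ^ (2 * l) : ℝ≥0) : ℝ≥0∞) := by
    intro x
    refine lintegral_congr fun y => ?_
    rw [← ENNReal.ofReal_coe_nnreal]
    congr 1
    push_cast
    rw [cφ, hl]
    congr 2
    ring
  have mm : Measurable (fun z : E n × E n => ((φ z.2 * nndist z.1 z.2 ^ (2 * l) : ℝ≥0) : ℝ≥0∞)) := by
    have h2 : Measurable (fun z : E n × E n => φ z.2) := mφ.comp measurable_snd
    exact (h2.mul (by fun_prop)).coe_nnreal_ennreal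
  have mV : Measurable (fun x => ∫⁻ y, ENNReal.ofReal (f y * dist x y ^ (α - n))) := by
    simp only [eV]
    exact Measurable.lintegral_prod_right' mm
  have eI : ENNReal.ofReal (NN n α * (∫ x, |f x| ^ p) ^ (1 / p)) =
      ENNReal.ofReal (NN n α) * (∫⁻ x, ((φ x ^ p : ℝ≥0) : ℝ≥0∞)) ^ (1 / p) := by
    rw [ENNReal.ofReal_mul (NN_pos hn hα).le]
    congr 1
    rw [← ENNReal.ofReal_rpow_of_nonneg (integral_nonneg fun x => by positivity) (by positivity),
      ofReal_integral_eq_lintegral_ofReal hi (Eventually.of_forall fun x => by positivity)]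
    congr 1
    refine lintegral_congr fun x => ?_
    rw [← ENNReal.ofReal_coe_nnreal, NNReal.coe_rpow, cφ, abs_of_nonneg (f0 x)]
  rw [eI]
  refine dual_final mV hp0 hq0 ?_ ?_
  · have : (n:ℝ) - α ≠ 0 := by linarith
    rw [hp, hq]; field_simp; ring
  intro g hg
  have key := bil_Rn hn hl0 hpl hg mφ
  rw [const_eq hn hl0 hal hpl, mul_assoc] at key
  have hmu0 : (mu n) Set.univ ^ (2 / p - 1) ≠ 0 ∧ (mu n) Set.univ ^ (2 / p - 1) ≠ ⊤ := by
    have h3 : 0 < Real.Gamma ((n : ℝ) / 2) := Real.Gamma_pos_of_pos (by positivity)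
    have h4 : 0 < Real.Gamma (n : ℝ) := Real.Gamma_pos_of_pos (by positivity)
    have hpi := Real.pi_pos
    rw [mu_univ hn, ENNReal.ofReal_rpow_of_pos (by positivity)]
    refine ⟨?_, ENNReal.ofReal_ne_top⟩
    rw [ne_eq, ENNReal.ofReal_eq_zero, not_le]
    positivity
  rw [ENNReal.mul_le_mul_iff_right hmu0.1 hmu0.2] at key
  rw [mul_assoc, mul_comm (_ ^ (1 / p))]
  refine key.trans (le_of_eq (lintegral_congr fun x => ?_))
  rw [eV, ← lintegral_const_mul' _ _ ENNReal.coe_ne_top]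
  refine lintegral_congr fun y => ?_
  rw [← ENNReal.coe_mul, mul_assoc]

end
end RHLS


/-- **Sharp reversed HLS inequality on `ℝⁿ`** (Corollary 1.3, inequality part):
for `1 ≤ n < α`, `p = 2n/(n+α)`, `q = 2n/(n-α)`, every nonnegative `f ∈ L^p(ℝⁿ)` satisfies
`‖I_α f‖_{L^q(ℝⁿ)} ≥ N*(n,α) ‖f‖_{L^p(ℝⁿ)}`, where
`N*(n,α) = π^((n-α)/2) Γ(α/2)/Γ((n+α)/2) (Γ(n/2)/Γ(n))^(-α/n)`. -/
theorem sharp_reversed_HLS_Rn (n : ℕ) (hn : 1 ≤ n) (α p q : ℝ)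
    (hα : (n : ℝ) < α)
    (hp : p = 2 * n / ((n : ℝ) + α)) (hq : q = 2 * n / ((n : ℝ) - α)) :
    ∀ f : EuclideanSpace ℝ (Fin n) → ℝ,
      Measurable f → (∀ x, 0 ≤ f x) → Integrable (fun x => |f x| ^ p) →
      ENNReal.ofReal
          ((Real.pi ^ (((n : ℝ) - α) / 2) * (Real.Gamma (α / 2) / Real.Gamma (((n : ℝ) + α) / 2)) *
              (Real.Gamma ((n : ℝ) / 2) / Real.Gamma (n : ℝ)) ^ (-(α / (n : ℝ)))) *
            (∫ x, |f x| ^ p) ^ (1 / p)) ≤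
        (∫⁻ x, (rieszNeg n α f x) ^ q) ^ (1 / q) := by
  intro f hf f0 hi
  exact RHLS.final n hn α p q hα hp hq f hf f0 hi
end

section
/- Let 1 ≤ n < α, p = 2n/(n+α), q = 2n/(n−α). Let p₁ ∈ (0, 2n/(n+α)) and s ∈ (n/(n−α), 0) satisfy 1/p₁ + 1/s − 1 = (n−α)/(2n). Suppose f ∈ L^p(ℝⁿ) is a nonnegative radially symmetric function satisfying f(x) ≤ ε|x|^{−n/p} for all x ≠ 0, for some ε > 0. Then there exists a constant C_n > 0, independent of f and ε, such that ‖I_α f‖_{L^q(ℝⁿ)} ≥ C_n · ε^{1 − p/p₁} · ‖f‖_{L^p(ℝⁿ)}^{p/p₁}. -/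
open MeasureTheory ENNReal

lemma core_pt {X : Type*} [MeasurableSpace X] (μ : Measure X) (F k : X → ℝ≥0∞)
    (hF : Measurable F) (hk : Measurable k) (hk0 : ∀ y, k y ≠ 0) (hkt : ∀ y, k y ≠ ⊤)
    (E A : ℝ≥0∞) (hE0 : E ≠ 0) (hEt : E ≠ ⊤) (hFE : ∀ y, F y ≤ E)
    (p p₁ q m : ℝ) (hp₁ : 0 < p₁) (hp₁p : p₁ < p) (hp₁1 : p₁ < 1) (hq : q < 0)
    (hm : m = -q / p₁)
    (hN0 : ∫⁻ y, F y ^ p ∂μ ≠ 0)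
    (hA : ∫⁻ y, k y ^ (-(p₁ / 2 / (1 - p₁))) ∂μ ≤ A) :
    (∫⁻ y, F y * k y ∂μ) ^ q * ((E ^ (p₁ - p)) ^ m * (∫⁻ y, F y ^ p ∂μ) ^ (m + 1)) ≤
      (A ^ (1 - p₁)) ^ m * ∫⁻ y, F y ^ p * k y ^ (q / 2) ∂μ := by
  have hm0 : 0 < m := by rw [hm]; exact div_pos (by linarith) hp₁
  have hFt : ∀ y, F y ≠ ⊤ := fun y => ne_top_of_le_ne_top hEt (hFE y)
  have hFp : ∀ y, E ^ (p₁ - p) * F y ^ p ≤ F y ^ p₁ := by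
    intro y
    by_cases h0 : F y = 0
    · simp [h0, ENNReal.zero_rpow_of_pos (hp₁.trans hp₁p)]
    · have h1 : F y ^ p = F y ^ (p - p₁) * F y ^ p₁ := by
        rw [← ENNReal.rpow_add _ _ h0 (hFt y)]; congr 1; ring
      rw [h1, ← mul_assoc]
      calc E ^ (p₁ - p) * F y ^ (p - p₁) * F y ^ p₁ 
          ≤ E ^ (p₁ - p) * E ^ (p - p₁) * F y ^ p₁ := by
            gcongr
            exact hFE y
        _ = F y ^ p₁ := by
            rw [← ENNReal.rpow_add _ _ hE0 hEt]; simp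
  set H := ∫⁻ y, F y * k y ∂μ with hH
  set N := ∫⁻ y, F y ^ p ∂μ with hN
  set J := ∫⁻ y, F y ^ p * k y ^ (q / 2) ∂μ with hJ
  set G := ∫⁻ y, F y ^ p * k y ^ (p₁ / 2) ∂μ with hG
  have h1mp : 0 < 1 - p₁ := by linarith
  -- reverse Hoelder
  have s1 : E ^ (p₁ - p) * G ≤ H ^ p₁ * A ^ (1 - p₁) := by
    have := ENNReal.lintegral_mul_norm_pow_le (μ := μ) (f := fun y => F y * k y)
      (g := fun y => k y ^ (-(p₁ / 2 / (1 - p₁)))) (hF.mul hk).aemeasurable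
      (hk.pow_const _).aemeasurable hp₁.le h1mp.le (by ring)
    calc E ^ (p₁ - p) * G = ∫⁻ y, E ^ (p₁ - p) * (F y ^ p * k y ^ (p₁ / 2)) ∂μ := by
          rw [hG, lintegral_const_mul _ (by fun_prop)]
      _ ≤ ∫⁻ y, (F y * k y) ^ p₁ * (k y ^ (-(p₁ / 2 / (1 - p₁)))) ^ (1 - p₁) ∂μ := by
          apply lintegral_mono
          intro y
          simp only
          rw [← mul_assoc, ENNReal.mul_rpow_of_nonneg _ _ hp₁.le, mul_assoc (F y ^ p₁),
            ← ENNReal.rpow_mul, ← ENNReal.rpow_add _ _ (hk0 y) (hkt y)]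
          have : p₁ + -(p₁ / 2 / (1 - p₁)) * (1 - p₁) = p₁ / 2 := by
            field_simp; ring
          rw [this]
          gcongr
          exact hFp y
      _ ≤ _ := this
      _ ≤ _ := by gcongr
  -- Jensen
  have s2 : N ^ (m + 1) ≤ G ^ m * J := by
    have hm1 : 0 < m + 1 := by linarith
    have := ENNReal.lintegral_mul_norm_pow_le (μ := μ) (f := fun y => F y ^ p * k y ^ (p₁ / 2))
      (g := fun y => F y ^ p * k y ^ (q / 2)) (p := m / (m + 1)) (q := 1 / (m + 1))
      (by fun_prop) (by fun_prop) (by positivity) (by positivity) (by field_simp)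
    have e : ∀ y, (F y ^ p * k y ^ (p₁ / 2)) ^ (m / (m + 1)) *
        (F y ^ p * k y ^ (q / 2)) ^ (1 / (m + 1)) = F y ^ p := by
      intro y
      rw [ENNReal.mul_rpow_of_nonneg _ _ (by positivity),
        ENNReal.mul_rpow_of_nonneg _ _ (by positivity), mul_mul_mul_comm,
        ← ENNReal.rpow_add_of_nonneg _ _ (by positivity) (by positivity),
        ← ENNReal.rpow_mul, ← ENNReal.rpow_mul (k y), ← ENNReal.rpow_mul (k y),
        ← ENNReal.rpow_add _ _ (hk0 y) (hkt y)]
      have e1 : m / (m + 1) + 1 / (m + 1) = 1 := by field_simp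
      rw [e1, mul_one]
      have e2 : p₁ / 2 * (m / (m + 1)) + q / 2 * (1 / (m + 1)) = 0 := by
        have : p₁ * m = -q := by rw [hm]; field_simp
        field_simp; linarith
      rw [e2]; simp
    simp_rw [e] at this
    calc N ^ (m + 1) ≤ (G ^ (m / (m + 1)) * J ^ (1 / (m + 1))) ^ (m + 1) := by gcongr
      _ = G ^ m * J := by
        rw [ENNReal.mul_rpow_of_nonneg _ _ hm1.le, ← ENNReal.rpow_mul, ← ENNReal.rpow_mul]
        have e1 : m / (m + 1) * (m + 1) = m := by field_simp
        have e2 : 1 / (m + 1) * (m + 1) = 1 := by field_simp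
        rw [e1, e2, ENNReal.rpow_one]
  have s3 : (E ^ (p₁ - p)) ^ m * N ^ (m + 1) ≤ H ^ (-q) * ((A ^ (1 - p₁)) ^ m * J) := by
    calc (E ^ (p₁ - p)) ^ m * N ^ (m + 1) ≤ (E ^ (p₁ - p)) ^ m * (G ^ m * J) := by gcongr
      _ = (E ^ (p₁ - p) * G) ^ m * J := by
        rw [ENNReal.mul_rpow_of_nonneg _ _ hm0.le, mul_assoc]
      _ ≤ (H ^ p₁ * A ^ (1 - p₁)) ^ m * J := by gcongr
      _ = _ := by
        rw [ENNReal.mul_rpow_of_nonneg _ _ hm0.le, ← ENNReal.rpow_mul, mul_assoc]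
        congr 2
        rw [hm]; field_simp
  by_cases hHt : H = ⊤
  · rw [hHt, ENNReal.top_rpow_of_neg hq]; simp
  have hH0 : H ≠ 0 := by
    intro h
    rw [h, ENNReal.zero_rpow_of_pos (by linarith), zero_mul] at s3
    have h1 : (E ^ (p₁ - p)) ^ m ≠ 0 := by
      have : E ^ (p₁ - p) ≠ 0 := by
        simp [ENNReal.rpow_eq_zero_iff, hE0, hEt]
      simp [ENNReal.rpow_eq_zero_iff, this, hm0.le]
    have h2 : N ^ (m + 1) ≠ 0 := by
      simp only [ne_eq, ENNReal.rpow_eq_zero_iff, hN0, false_and, false_or, not_and, not_lt]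
      intro _; linarith
    exact (mul_ne_zero h1 h2) (le_antisymm s3 bot_le)
  calc _ ≤ H ^ q * (H ^ (-q) * ((A ^ (1 - p₁)) ^ m * J)) := by gcongr
    _ = _ := by
      rw [← mul_assoc, ← ENNReal.rpow_add _ _ hH0 hHt]; simp

lemma core {X : Type*} [MeasurableSpace X] (μ : Measure X) [SFinite μ] (F : X → ℝ≥0∞)
    (K : X → X → ℝ≥0∞)
    (hF : Measurable F) (hK : Measurable (Function.uncurry K))
    (hK0 : ∀ x y, K x y ≠ 0) (hKt : ∀ x y, K x y ≠ ⊤)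
    (E A B : ℝ≥0∞) (hE0 : E ≠ 0) (hEt : E ≠ ⊤) (hFE : ∀ y, F y ≤ E)
    (p p₁ q m : ℝ) (hp₁ : 0 < p₁) (hp₁p : p₁ < p) (hp₁1 : p₁ < 1) (hq : q < 0)
    (hm : m = -q / p₁)
    (hN0 : ∫⁻ y, F y ^ p ∂μ ≠ 0) (hNt : ∫⁻ y, F y ^ p ∂μ ≠ ⊤)
    (hA : ∀ᵐ x ∂μ, ∫⁻ y, K x y ^ (-(p₁ / 2 / (1 - p₁))) ∂μ ≤ A)
    (hB : ∀ᵐ y ∂μ, ∫⁻ x, K x y ^ (q / 2) ∂μ ≤ B) :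
    (∫⁻ x, (∫⁻ y, F y * K x y ∂μ) ^ q ∂μ) *
      ((E ^ (p₁ - p)) ^ m * (∫⁻ y, F y ^ p ∂μ) ^ m) ≤ (A ^ (1 - p₁)) ^ m * B := by
  have hm0 : 0 < m := by rw [hm]; exact div_pos (by linarith) hp₁
  set N := ∫⁻ y, F y ^ p ∂μ with hN
  have hKx : ∀ x, Measurable (K x) := fun x => hK.of_uncurry_left
  have hKm : Measurable (fun z : X × X => K z.1 z.2) := hK
  have hHm : Measurable (fun x => ∫⁻ y, F y * K x y ∂μ) := by
    apply Measurable.lintegral_prod_right'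
      (f := fun z : X × X => F z.2 * K z.1 z.2)
    fun_prop
  have hJm : Measurable (fun x => ∫⁻ y, F y ^ p * K x y ^ (q / 2) ∂μ) := by
    apply Measurable.lintegral_prod_right'
      (f := fun z : X × X => F z.2 ^ p * K z.1 z.2 ^ (q / 2))
    fun_prop
  have key : (∫⁻ x, (∫⁻ y, F y * K x y ∂μ) ^ q ∂μ) *
      ((E ^ (p₁ - p)) ^ m * N ^ (m + 1)) ≤ (A ^ (1 - p₁)) ^ m * (B * N) := by
    calc _ = ∫⁻ x, (∫⁻ y, F y * K x y ∂μ) ^ q * ((E ^ (p₁ - p)) ^ m * N ^ (m + 1)) ∂μ := by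
          rw [lintegral_mul_const _ (hHm.pow_const _)]
      _ ≤ ∫⁻ x, (A ^ (1 - p₁)) ^ m * ∫⁻ y, F y ^ p * K x y ^ (q / 2) ∂μ ∂μ := by
          apply lintegral_mono_ae
          filter_upwards [hA] with x hx
          exact core_pt μ F (K x) hF (hKx x) (hK0 x) (hKt x) E A hE0 hEt hFE p p₁ q m hp₁ hp₁p
            hp₁1 hq hm hN0 hx
      _ = (A ^ (1 - p₁)) ^ m * ∫⁻ x, ∫⁻ y, F y ^ p * K x y ^ (q / 2) ∂μ ∂μ := by
          rw [lintegral_const_mul _ hJm]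
      _ ≤ _ := by
          gcongr
          rw [lintegral_lintegral_swap]
          · calc _ ≤ ∫⁻ y, B * F y ^ p ∂μ := by
                  apply lintegral_mono_ae
                  filter_upwards [hB] with y hy
                  have : Measurable (fun x => K x y) := hK.of_uncurry_right
                  rw [lintegral_const_mul _ (by fun_prop), mul_comm]
                  gcongr
              _ = _ := by rw [lintegral_const_mul _ (by fun_prop)]
          · apply Measurable.aemeasurable
            change Measurable (fun z : X × X => F z.2 ^ p * K z.1 z.2 ^ (q / 2))
            fun_prop
  rw [ENNReal.rpow_add _ _ hN0 hNt, ENNReal.rpow_one, ← mul_assoc, ← mul_assoc, ← mul_assoc,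
    ENNReal.mul_le_mul_iff_left hN0 hNt] at key
  rwa [← mul_assoc]

lemma radial_int (R τ : ℝ) (hR : 0 < R) (hτ : 0 < τ) :
    IntegrableOn (fun r : ℝ => r⁻¹ * Real.exp (-τ * |Real.log R - Real.log r|)) (Set.Ioi 0) ∧
    ∫ r in Set.Ioi 0, r⁻¹ * Real.exp (-τ * |Real.log R - Real.log r|) = 2 / τ := by
  have e1 : Set.EqOn (fun r : ℝ => R ^ (-τ) * r ^ (τ - 1)) 
      (fun r : ℝ => r⁻¹ * Real.exp (-τ * |Real.log R - Real.log r|)) (Set.Ioc 0 R) := by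
    intro r hr
    have h0 : 0 < r := hr.1
    have hl : Real.log r ≤ Real.log R := Real.log_le_log h0 hr.2
    simp only
    rw [abs_of_nonneg (by linarith), Real.rpow_def_of_pos hR, Real.rpow_def_of_pos h0, 
      ← Real.exp_add]
    nth_rewrite 2 [← Real.exp_log h0]
    rw [← Real.exp_neg, ← Real.exp_add]
    congr 1; ring
  have e2 : Set.EqOn (fun r : ℝ => R ^ τ * r ^ (-τ - 1)) 
      (fun r : ℝ => r⁻¹ * Real.exp (-τ * |Real.log R - Real.log r|)) (Set.Ioi R) := by
    intro r hr
    have h0 : 0 < r := hR.trans hr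
    have hl : Real.log R ≤ Real.log r := Real.log_le_log hR (le_of_lt hr)
    simp only
    rw [abs_of_nonpos (by linarith), Real.rpow_def_of_pos hR, Real.rpow_def_of_pos h0, 
      ← Real.exp_add]
    nth_rewrite 2 [← Real.exp_log h0]
    rw [← Real.exp_neg, ← Real.exp_add]
    congr 1; ring
  have i1 : IntegrableOn (fun r : ℝ => r ^ (τ - 1)) (Set.Ioc 0 R) := by
    have := intervalIntegral.intervalIntegrable_rpow' (a := 0) (b := R) (r := τ - 1) (by linarith)
    rwa [intervalIntegrable_iff_integrableOn_Ioc_of_le hR.le] at this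
  have i2 : IntegrableOn (fun r : ℝ => r ^ (-τ - 1)) (Set.Ioi R) :=
    integrableOn_Ioi_rpow_of_lt (by linarith) hR
  have j1 := (IntegrableOn.congr_fun (i1.const_mul (R ^ (-τ))) e1 measurableSet_Ioc)
  have j2 := (IntegrableOn.congr_fun (i2.const_mul (R ^ τ)) e2 measurableSet_Ioi)
  rw [← Set.Ioc_union_Ioi_eq_Ioi hR.le]
  refine ⟨j1.union j2, ?_⟩
  rw [setIntegral_union (Set.Ioc_disjoint_Ioi le_rfl) measurableSet_Ioi j1 j2,
    ← setIntegral_congr_fun measurableSet_Ioc e1, ← setIntegral_congr_fun measurableSet_Ioi e2,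
    integral_const_mul, integral_const_mul, integral_Ioi_rpow_of_lt (by linarith) hR,
    ← intervalIntegral.integral_of_le hR.le, integral_rpow (Or.inl (by linarith))]
  have : R ^ (-τ) * R ^ τ = 1 := by rw [← Real.rpow_add hR]; simp
  have h2 : R ^ τ * R ^ (-τ) = 1 := by rw [mul_comm]; exact this
  simp only [sub_add_cancel, Real.zero_rpow hτ.ne', sub_zero]
  rw [neg_div_neg_eq] 
  rw [← mul_div_assoc, ← mul_div_assoc, this, h2]; ring

noncomputable def muN (n : ℕ) : Measure (EuclideanSpace ℝ (Fin n)) :=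
  (volume : Measure (EuclideanSpace ℝ (Fin n))).withDensity
    (fun x => ENNReal.ofReal (‖x‖ ^ (-(n : ℝ))))

instance (n : ℕ) : SFinite (muN n) := by unfold muN; infer_instance

noncomputable def kerE (n : ℕ) (b : ℝ) (x y : EuclideanSpace ℝ (Fin n)) : ℝ≥0∞ :=
  ENNReal.ofReal (Real.exp (b * |Real.log ‖x‖ - Real.log ‖y‖|))

lemma kerE_rpow (n : ℕ) (b u : ℝ) (x y : EuclideanSpace ℝ (Fin n)) :
    kerE n b x y ^ u = kerE n (b * u) x y := by
  unfold kerE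
  rw [ENNReal.ofReal_rpow_of_pos (Real.exp_pos _), ← Real.exp_mul]
  congr 2; ring

lemma kerE_comm (n : ℕ) (b : ℝ) (x y : EuclideanSpace ℝ (Fin n)) :
    kerE n b x y = kerE n b y x := by
  unfold kerE; rw [abs_sub_comm]

lemma kerE_meas (n : ℕ) (b : ℝ) : Measurable (Function.uncurry (kerE n b)) := by
  unfold kerE Function.uncurry; fun_prop

lemma muN_lint (n : ℕ) {g : EuclideanSpace ℝ (Fin n) → ℝ≥0∞} (hg : Measurable g) :
    ∫⁻ x, g x ∂(muN n) = ∫⁻ x, ENNReal.ofReal (‖x‖ ^ (-(n : ℝ))) * g x := by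
  unfold muN
  rw [lintegral_withDensity_eq_lintegral_mul _ (by fun_prop) hg]; rfl

lemma ker_int (n : ℕ) (hn : 1 ≤ n) (τ : ℝ) (hτ : 0 < τ) :
    ∃ A : ℝ, 0 < A ∧ ∀ x : EuclideanSpace ℝ (Fin n), x ≠ 0 →
      ∫⁻ y, kerE n (-τ) x y ∂(muN n) ≤ ENNReal.ofReal A := by
  have : Nonempty (Fin n) := ⟨⟨0, hn⟩⟩
  have hfr : Module.finrank ℝ (EuclideanSpace ℝ (Fin n)) = n := by simp
  have hr : ∀ R : ℝ, Set.EqOn (fun r : ℝ => r⁻¹ * Real.exp (-τ * |Real.log R - Real.log r|))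
      (fun r : ℝ => r ^ (n - 1) • (r ^ (-(n:ℝ)) * Real.exp (-τ * |Real.log R - Real.log r|)))
      (Set.Ioi 0) := by
    intro R r hr
    have h0 : (0:ℝ) < r := hr
    simp only [smul_eq_mul]
    rw [← mul_assoc]
    congr 1
    rw [← Real.rpow_natCast, ← Real.rpow_add h0, ← Real.rpow_neg_one]
    congr 1
    rw [Nat.cast_sub hn]; push_cast; ring
  refine ⟨n * (volume.real (Metric.ball (0 : EuclideanSpace ℝ (Fin n)) 1) * (2 / τ)) + 1,
    by positivity, ?_⟩
  intro x hx
  have hR : 0 < ‖x‖ := norm_pos_iff.mpr hx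
  obtain ⟨h1, h2⟩ := radial_int ‖x‖ τ hR hτ
  have h3 := h1.congr_fun (hr ‖x‖) measurableSet_Ioi
  rw [setIntegral_congr_fun measurableSet_Ioi (hr ‖x‖)] at h2
  have h4 : Integrable (fun y : EuclideanSpace ℝ (Fin n) =>
      ‖y‖ ^ (-(n:ℝ)) * Real.exp (-τ * |Real.log ‖x‖ - Real.log ‖y‖|)) := by
    refine (integrable_fun_norm_addHaar (E := EuclideanSpace ℝ (Fin n)) volume (f := fun r : ℝ => r ^ (-(n:ℝ)) * Real.exp (-τ * |Real.log ‖x‖ - Real.log r|))).mpr ?_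
    rw [hfr]; exact h3
  have h5 := integral_fun_norm_addHaar (E := EuclideanSpace ℝ (Fin n)) volume (fun r : ℝ => r ^ (-(n:ℝ)) * Real.exp (-τ * |Real.log ‖x‖ - Real.log r|))
  rw [hfr, h2] at h5
  rw [muN_lint n ((kerE_meas n (-τ)).of_uncurry_left)]
  have h6 := ofReal_integral_eq_lintegral_ofReal h4 (Filter.Eventually.of_forall fun y => by positivity)
  unfold kerE
  simp_rw [← ENNReal.ofReal_mul (Real.rpow_nonneg (norm_nonneg _) _)]
  rw [← h6, h5]
  apply ENNReal.ofReal_le_ofReal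
  simp

lemma enn_mul_rpow {c x : ℝ≥0∞} (hc : c ≠ 0) (hct : c ≠ ⊤) {z : ℝ} :
    (c * x) ^ z = c ^ z * x ^ z := by
  rw [ENNReal.mul_rpow_eq_ite]; simp [hc, hct]

lemma enn_rpow_anti {a b : ℝ≥0∞} (h : a ≤ b) {z : ℝ} (hz : z ≤ 0) : b ^ z ≤ a ^ z := by
  obtain ⟨w, rfl⟩ : ∃ w, z = -w := ⟨-z, by ring⟩
  rw [ENNReal.rpow_neg, ENNReal.rpow_neg]
  apply ENNReal.inv_le_inv.mpr
  exact ENNReal.rpow_le_rpow h (by linarith)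

lemma riesz_lower (n : ℕ) (hn : 1 ≤ n) (α : ℝ) (hα : (n : ℝ) < α)
    (f : EuclideanSpace ℝ (Fin n) → ℝ) (hf : Measurable f) (hf0 : ∀ x, 0 ≤ f x)
    (hrad : ∃ g : ℝ → ℝ, ∀ x, f x = g ‖x‖) (p : ℝ) (hp : (n : ℝ) / p = (n + α) / 2)
    (x : EuclideanSpace ℝ (Fin n)) (hx : x ≠ 0) :
    ENNReal.ofReal (‖x‖ ^ ((α - n) / 2) / 2) *
      ∫⁻ y, ENNReal.ofReal (f y * ‖y‖ ^ ((n : ℝ) / p)) * kerE n ((α - n) / 2) x y ∂(muN n) ≤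
      rieszNeg n α f x := by
  have : Nonempty (Fin n) := ⟨⟨0, hn⟩⟩
  obtain ⟨g, hg⟩ := hrad
  have hR : 0 < ‖x‖ := norm_pos_iff.mpr hx
  have hk : Measurable (kerE n ((α - n) / 2) x) := (kerE_meas n _).of_uncurry_left
  have ha : 0 < α - n := by linarith
  have h2 : rieszNeg n α f x = ∫⁻ y, ENNReal.ofReal (f y * dist x (-y) ^ (α - n)) := by
    unfold rieszNeg
    rw [← lintegral_neg_eq_self]
    congr 1; ext y
    rw [hg (-y), norm_neg, ← hg]
  have h3 : rieszNeg n α f x + rieszNeg n α f x = ∫⁻ y, (ENNReal.ofReal (f y * dist x y ^ (α - n))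
      + ENNReal.ofReal (f y * dist x (-y) ^ (α - n))) := by
    rw [lintegral_add_left (by fun_prop), ← h2]; rfl
  have h4 : ENNReal.ofReal (‖x‖ ^ ((α - n) / 2)) *
      ∫⁻ y, ENNReal.ofReal (f y * ‖y‖ ^ ((n : ℝ) / p)) * kerE n ((α - n) / 2) x y ∂(muN n) ≤
      rieszNeg n α f x + rieszNeg n α f x := by
    rw [h3, muN_lint n (by fun_prop), ← lintegral_const_mul _ (by fun_prop)]
    apply lintegral_mono_ae
    filter_upwards [Measure.ae_ne volume (0 : EuclideanSpace ℝ (Fin n))] with y hy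
    have hr : 0 < ‖y‖ := norm_pos_iff.mpr hy
    unfold kerE
    rw [← ENNReal.ofReal_mul (by have := hf0 y; positivity), ← ENNReal.ofReal_mul (by positivity),
      ← ENNReal.ofReal_mul (by positivity), ← ENNReal.ofReal_add
        (mul_nonneg (hf0 y) (by positivity)) (mul_nonneg (hf0 y) (by positivity))]
    apply ENNReal.ofReal_le_ofReal
    have e : ‖x‖ ^ ((α - n) / 2) * (‖y‖ ^ (-(n:ℝ)) * (f y * ‖y‖ ^ ((n : ℝ) / p) *
        Real.exp ((α - n) / 2 * |Real.log ‖x‖ - Real.log ‖y‖|))) =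
        f y * (max ‖x‖ ‖y‖) ^ (α - n) := by
      have hmx : 0 < max ‖x‖ ‖y‖ := lt_max_of_lt_left hR
      have hl : Real.log (max ‖x‖ ‖y‖) = max (Real.log ‖x‖) (Real.log ‖y‖) := by
        rcases le_total ‖x‖ ‖y‖ with h | h
        · rw [max_eq_right h, max_eq_right (Real.log_le_log hR h)]
        · rw [max_eq_left h, max_eq_left (Real.log_le_log hr h)]
      rw [hp, Real.rpow_def_of_pos hR, Real.rpow_def_of_pos hr, Real.rpow_def_of_pos hr,
        Real.rpow_def_of_pos hmx, hl]
      rw [show ∀ A B C D G : ℝ, A * (B * (G * C * D)) = G * (A * (B * (C * D))) from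
        fun A B C D G => by ring, ← Real.exp_add, ← Real.exp_add, ← Real.exp_add]
      congr 2
      rw [max_def]
      split_ifs with h
      · rw [abs_of_nonpos (by linarith)]; ring
      · rw [abs_of_nonneg (by linarith)]; ring
    rw [e, ← mul_add]
    apply mul_le_mul_of_nonneg_left _ (hf0 y)
    have hpar := parallelogram_law_with_norm ℝ x y
    have hd1 : dist x y = ‖x - y‖ := dist_eq_norm _ _
    have hd2 : dist x (-y) = ‖x + y‖ := by rw [dist_eq_norm, sub_neg_eq_add]
    rw [hd1, hd2]
    have hmm : max ‖x‖ ‖y‖ ≤ max ‖x - y‖ ‖x + y‖ := by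
      by_contra! hc
      obtain ⟨c1, c2⟩ := max_lt_iff.mp hc
      have d1 : ‖x - y‖ * ‖x - y‖ < max ‖x‖ ‖y‖ * max ‖x‖ ‖y‖ :=
        mul_self_lt_mul_self (norm_nonneg _) c1
      have d2 : ‖x + y‖ * ‖x + y‖ < max ‖x‖ ‖y‖ * max ‖x‖ ‖y‖ :=
        mul_self_lt_mul_self (norm_nonneg _) c2
      have d3 : max ‖x‖ ‖y‖ * max ‖x‖ ‖y‖ ≤ ‖x‖ * ‖x‖ + ‖y‖ * ‖y‖ := by
        rcases le_total ‖x‖ ‖y‖ with h | h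
        · rw [max_eq_right h]; nlinarith [norm_nonneg x]
        · rw [max_eq_left h]; nlinarith [norm_nonneg y]
      linarith
    calc _ ≤ (max ‖x - y‖ ‖x + y‖) ^ (α - n) := by gcongr
      _ ≤ _ := by
        have p1 : 0 ≤ ‖x - y‖ ^ (α - n) := by positivity
        have p2 : 0 ≤ ‖x + y‖ ^ (α - n) := by positivity
        rcases le_total ‖x - y‖ ‖x + y‖ with h | h
        · rw [max_eq_right h]; linarith
        · rw [max_eq_left h]; linarith
  rw [ENNReal.ofReal_div_of_pos (by norm_num), ENNReal.div_eq_inv_mul, mul_assoc]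
  rw [← two_mul] at h4
  have h5 : (ENNReal.ofReal 2)⁻¹ * (2 * rieszNeg n α f x) = rieszNeg n α f x := by
    rw [← mul_assoc]
    simp [ENNReal.inv_mul_cancel]
  rw [← h5]
  gcongr

/-- **Lieb-type lemma for the minimizing sequence** (Lemma 3.2): for `1 ≤ n < α`,
`p = 2n/(n+α)`, `q = 2n/(n-α)`, parameters `p₁ ∈ (0, 2n/(n+α))` and `s ∈ (n/(n-α), 0)`
with `1/p₁ + 1/s - 1 = (n-α)/(2n)`, and a nonnegative radially symmetric `f ∈ L^p(ℝⁿ)`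
with `f(x) ≤ ε |x|^(-n/p)` for all `x ≠ 0`, one has
`‖I_α f‖_{L^q(ℝⁿ)} ≥ C_n ε^(1-p/p₁) ‖f‖_{L^p(ℝⁿ)}^(p/p₁)` with `C_n` independent of
`f` and `ε`. -/
theorem lieb_type_lemma (n : ℕ) (hn : 1 ≤ n) (α p q p₁ s : ℝ)
    (hα : (n : ℝ) < α)
    (hp : p = 2 * n / ((n : ℝ) + α)) (hq : q = 2 * n / ((n : ℝ) - α))
    (hp₁0 : 0 < p₁) (hp₁1 : p₁ < 2 * n / ((n : ℝ) + α))
    (hs0 : (n : ℝ) / ((n : ℝ) - α) < s) (hs1 : s < 0)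
    (hp₁s : 1 / p₁ + 1 / s - 1 = ((n : ℝ) - α) / (2 * n)) :
    ∃ C : ℝ, 0 < C ∧ ∀ ε : ℝ, 0 < ε → ∀ f : EuclideanSpace ℝ (Fin n) → ℝ,
      Measurable f → (∀ x, 0 ≤ f x) → Integrable (fun x => |f x| ^ p) →
      (∃ g : ℝ → ℝ, ∀ x, f x = g ‖x‖) →
      (∀ x : EuclideanSpace ℝ (Fin n), x ≠ 0 → f x ≤ ε * ‖x‖ ^ (-((n : ℝ) / p))) →
      ENNReal.ofReal
          (C * ε ^ (1 - p / p₁) * ((∫ x, |f x| ^ p) ^ (1 / p)) ^ (p / p₁)) ≤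
        (∫⁻ x, (rieszNeg n α f x) ^ q) ^ (1 / q) := by
  have : Nonempty (Fin n) := ⟨⟨0, hn⟩⟩
  have hn0 : (0 : ℝ) < n := by exact_mod_cast hn
  have hnα : 0 < (n : ℝ) + α := by linarith
  have hp0 : 0 < p := by rw [hp]; positivity
  have hp1 : p < 1 := by rw [hp, div_lt_one hnα]; linarith
  have hq0 : q < 0 := by rw [hq]; exact div_neg_of_pos_of_neg (by linarith) (by linarith)
  have hp₁p : p₁ < p := by rw [hp]; exact hp₁1
  have hp₁1' : p₁ < 1 := by linarith
  have hnp : (n : ℝ) / p = (n + α) / 2 := by rw [hp]; field_simp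
  have haq : (α - n) / 2 * q = -n := by
    have : (n : ℝ) - α ≠ 0 := by linarith
    rw [hq]; field_simp; ring
  have ha : 0 < (α - n) / 2 := by linarith
  have h1mp : 0 < 1 - p₁ := by linarith
  obtain ⟨A, hA0, hA⟩ := ker_int n hn ((α - n) / 2 * (p₁ / 2 / (1 - p₁))) (by positivity)
  obtain ⟨B, hB0, hB⟩ := ker_int n hn ((α - n) / 2 * (-q / 2))
    (mul_pos ha (by linarith))
  set m := -q / p₁ with hm
  have hm0 : 0 < m := div_pos (by linarith) hp₁0
  set D : ℝ := (1 / 2) ^ q * ((A ^ (1 - p₁)) ^ m * B) with hD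
  have hD0 : 0 < D := by positivity
  refine ⟨D ^ (1 / q), by positivity, ?_⟩
  intro ε hε f hf hf0 hint hrad hbd
  set M := ∫ x, |f x| ^ p with hM
  have hM0 : 0 ≤ M := integral_nonneg fun x => by positivity
  rcases hM0.eq_or_lt with hMz | hMpos
  · rw [← hMz, Real.zero_rpow (by positivity), Real.zero_rpow (by positivity)]; simp
  set F : EuclideanSpace ℝ (Fin n) → ℝ≥0∞ := fun y => ENNReal.ofReal (f y * ‖y‖ ^ ((n : ℝ) / p))
    with hF
  have hFm : Measurable F := by fun_prop
  have hN : ∫⁻ y, F y ^ p ∂(muN n) = ENNReal.ofReal M := by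
    rw [muN_lint n (by fun_prop), hM, ofReal_integral_eq_lintegral_ofReal hint
      (Filter.Eventually.of_forall fun y => by positivity)]
    apply lintegral_congr_ae
    filter_upwards [Measure.ae_ne volume (0 : EuclideanSpace ℝ (Fin n))] with y hy
    have hr : 0 < ‖y‖ := norm_pos_iff.mpr hy
    simp only [hF]
    rw [ENNReal.ofReal_rpow_of_nonneg (mul_nonneg (hf0 y) (by positivity)) hp0.le,
      ← ENNReal.ofReal_mul (by positivity), Real.mul_rpow (hf0 y) (by positivity),
      ← Real.rpow_mul hr.le, div_mul_cancel₀ _ hp0.ne', abs_of_nonneg (hf0 y),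
      mul_left_comm, ← Real.rpow_add hr]
    simp
  have hFE : ∀ y, F y ≤ ENNReal.ofReal ε := by
    intro y
    simp only [hF]
    apply ENNReal.ofReal_le_ofReal
    by_cases hy : y = 0
    · rw [hy, norm_zero, Real.zero_rpow (by positivity)]; simpa using hε.le
    · have hr : 0 < ‖y‖ := norm_pos_iff.mpr hy
      calc f y * ‖y‖ ^ ((n : ℝ) / p) ≤ ε * ‖y‖ ^ (-((n : ℝ) / p)) * ‖y‖ ^ ((n : ℝ) / p) := by
            gcongr; exact hbd y hy
        _ = ε := by rw [mul_assoc, ← Real.rpow_add hr]; simp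
  have hae : ∀ᵐ x ∂(muN n), x ≠ 0 :=
    (withDensity_absolutelyContinuous _ _).ae_le (Measure.ae_ne volume (0 : EuclideanSpace ℝ (Fin n)))
  have hcore := core (muN n) F (kerE n ((α - n) / 2)) hFm (kerE_meas n _)
    (fun x y => by unfold kerE; simp [Real.exp_pos]) (fun x y => by unfold kerE; simp)
    (ENNReal.ofReal ε) (ENNReal.ofReal A) (ENNReal.ofReal B) (by simpa using hε) (by simp) hFE
    p p₁ q m hp₁0 hp₁p hp₁1' hq0 hm (by rw [hN]; simpa using hMpos) (by rw [hN]; simp)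
    (by
      filter_upwards [hae] with x hx
      simp_rw [kerE_rpow, mul_neg]
      exact hA x hx)
    (by
      filter_upwards [hae] with y hy
      simp_rw [kerE_rpow, kerE_comm n _ _ y]
      have := hB y hy
      rwa [show -((α - n) / 2 * (-q / 2)) = (α - n) / 2 * (q / 2) by ring] at this)
  rw [hN] at hcore
  set Hq := ∫⁻ x, (∫⁻ y, F y * kerE n ((α - n) / 2) x y ∂(muN n)) ^ q ∂(muN n) with hHq
  have hHm : Measurable (fun x => ∫⁻ y, F y * kerE n ((α - n) / 2) x y ∂(muN n)) := by
    have hKm : Measurable (fun z : EuclideanSpace ℝ (Fin n) × EuclideanSpace ℝ (Fin n) =>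
      kerE n ((α - n) / 2) z.1 z.2) := kerE_meas n _
    apply Measurable.lintegral_prod_right'
      (f := fun z : EuclideanSpace ℝ (Fin n) × EuclideanSpace ℝ (Fin n) =>
        F z.2 * kerE n ((α - n) / 2) z.1 z.2)
    fun_prop
  have hup : ∫⁻ x, (rieszNeg n α f x) ^ q ≤ ENNReal.ofReal ((1 / 2) ^ q) * Hq := by
    rw [hHq, muN_lint n (hHm.pow_const _), ← lintegral_const_mul _ (by fun_prop)]
    apply lintegral_mono_ae
    filter_upwards [Measure.ae_ne volume (0 : EuclideanSpace ℝ (Fin n))] with x hx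
    have hR : 0 < ‖x‖ := norm_pos_iff.mpr hx
    have hlow := riesz_lower n hn α hα f hf hf0 hrad p hnp x hx
    have hc : ENNReal.ofReal ((1 / 2) ^ q) * ENNReal.ofReal (‖x‖ ^ (-(n : ℝ))) =
        ENNReal.ofReal (‖x‖ ^ ((α - n) / 2) / 2) ^ q := by
      rw [ENNReal.ofReal_rpow_of_pos (by positivity), ← ENNReal.ofReal_mul (by positivity),
        div_eq_mul_one_div (‖x‖ ^ ((α - n) / 2)),
        Real.mul_rpow (by positivity) (by positivity), ← Real.rpow_mul hR.le,
        haq, mul_comm]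
    rw [← mul_assoc, hc, ← enn_mul_rpow (by simp; positivity) (by simp)]
    exact enn_rpow_anti hlow hq0.le
  set T : ℝ := (ε ^ (p₁ - p)) ^ m * M ^ m with hT
  have hT0 : 0 < T := by positivity
  have hHq2 : Hq ≤ ENNReal.ofReal (((A ^ (1 - p₁)) ^ m * B) / T) := by
    rw [ENNReal.ofReal_div_of_pos hT0, ENNReal.le_div_iff_mul_le
      (Or.inl (by simpa using hT0)) (Or.inl (by simp))]
    rw [ENNReal.ofReal_rpow_of_pos hε, ENNReal.ofReal_rpow_of_pos (by positivity),
      ENNReal.ofReal_rpow_of_pos hMpos, ENNReal.ofReal_rpow_of_pos hA0,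
      ENNReal.ofReal_rpow_of_pos (by positivity), ← ENNReal.ofReal_mul (by positivity),
      ← ENNReal.ofReal_mul (by positivity)] at hcore
    exact hcore
  have hfin : ∫⁻ x, (rieszNeg n α f x) ^ q ≤ ENNReal.ofReal (D / T) := by
    refine hup.trans ?_
    rw [hD, mul_div_assoc, ENNReal.ofReal_mul (by positivity)]
    gcongr
  have hq1 : 1 / q ≤ 0 := (one_div_neg.mpr hq0).le
  refine le_trans (le_of_eq ?_) (enn_rpow_anti hfin hq1)
  rw [ENNReal.ofReal_rpow_of_pos (by positivity)]
  congr 1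
  clear_value D
  have hmq : m * (1 / q) = -(1 / p₁) := by
    have := hq0.ne
    rw [hm]; field_simp
  rw [Real.div_rpow hD0.le hT0.le, hT, Real.mul_rpow (by positivity) (by positivity),
    ← Real.rpow_mul (by positivity) m, ← Real.rpow_mul hMpos.le m, hmq,
    ← Real.rpow_mul hε.le, ← Real.rpow_mul hMpos.le,
    show (p₁ - p) * -(1 / p₁) = -(1 - p / p₁) by field_simp,
    show 1 / p * (p / p₁) = 1 / p₁ by field_simp, Real.rpow_neg hε.le, Real.rpow_neg hMpos.le,
    ← mul_inv, div_inv_eq_mul, mul_assoc]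
end
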